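/- arXiv:1008.4550 — 3 statements merged into one kernel-verified Lean document; each statement's English description precedes it below -/
import Mathlib

section
/- Let 0 < s < 1, p = (2−s)/(1−s) (equivalently s = (p−2)/(p−1)). There is a constant c(p) such that for all f with Fourier support in {2j ≠ ±k} one has ‖f‖_{L^p(Q)} ≤ c(p) ‖f‖_{E^s}, where ‖f‖²_{E^s} = Σ_{2j ≠ ±k} |k² − 4j²|^s |f̂(j,k)|². -/
open Real Complex MeasureTheory

/-- The absolute value of the wave symbol, `|k² - 4j²|`. -/
noncomputable def waveWeight (a : ℤ × ℤ) : ℝ := ((|a.2 ^ 2 - 4 * a.1 ^ 2| : ℤ) : ℝ)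

/-- The character `e^{i(2jx + kt)}`. -/
noncomputable def waveMode (a : ℤ × ℤ) (z : ℝ × ℝ) : ℂ :=
  Complex.exp (Complex.I * (2 * a.1 * z.1 + a.2 * z.2))

/-- The rectangle `[0,π] × [0,2π]`. -/
def waveRect : Set (ℝ × ℝ) := Set.Icc (0 : ℝ) Real.pi ×ˢ Set.Icc (0 : ℝ) (2 * Real.pi)

theorem waveMode_norm (a : ℤ × ℤ) (z : ℝ × ℝ) : ‖waveMode a z‖ = 1 := by
  have := Complex.norm_exp_ofReal_mul_I (2 * a.1 * z.1 + a.2 * z.2)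
  rw [mul_comm] at this
  simpa [waveMode] using this

theorem waveMode_continuous (a : ℤ × ℤ) : Continuous (waveMode a) := by
  unfold waveMode; fun_prop

theorem waveMode_mul_conj (a b : ℤ × ℤ) (z : ℝ × ℝ) :
    waveMode a z * (starRingEnd ℂ) (waveMode b z) = waveMode (a - b) z := by
  simp only [waveMode, ← Complex.exp_conj, ← Complex.exp_add]
  congr 1
  simp only [map_mul, map_add, Complex.conj_I, Complex.conj_ofReal, map_intCast, map_ofNat,
    Prod.fst_sub, Prod.snd_sub, Int.cast_sub]
  ring

theorem integral_exp_int_mul (m : ℤ) (hm : m ≠ 0) (L : ℝ) (hL0 : 0 ≤ L)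
    (hL : ∃ n : ℤ, (m : ℝ) * L = n * (2 * π)) :
    ∫ x in Set.Icc (0 : ℝ) L, Complex.exp (Complex.I * (m * x)) = 0 := by
  obtain ⟨n, hn⟩ := hL
  rw [integral_Icc_eq_integral_Ioc, ← intervalIntegral.integral_of_le hL0]
  have hc : Complex.I * (m : ℂ) ≠ 0 := by simp [hm]
  have hn' : (m : ℂ) * L = n * (2 * π) := by exact_mod_cast hn
  have := integral_exp_mul_complex (a := 0) (b := L) hc
  simp only [mul_assoc] at this
  rw [this, hn', show Complex.I * ((n : ℂ) * (2 * π)) = n * (2 * π * Complex.I) by ring,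
    Complex.exp_int_mul_two_pi_mul_I]
  simp

theorem volume_waveRect : volume waveRect = ENNReal.ofReal (2 * π ^ 2) := by
  rw [waveRect, Measure.volume_eq_prod, Measure.prod_prod]
  simp only [Real.volume_Icc, sub_zero]
  rw [← ENNReal.ofReal_mul pi_pos.le]
  ring_nf

theorem measureReal_restrict_waveRect_univ :
    (volume.restrict waveRect).real Set.univ = 2 * π ^ 2 := by
  rw [Measure.real, Measure.restrict_apply_univ, volume_waveRect,
    ENNReal.toReal_ofReal (by positivity)]

instance : IsFiniteMeasure (volume.restrict waveRect) :=
  ⟨by rw [Measure.restrict_apply_univ, volume_waveRect]; exact ENNReal.ofReal_lt_top⟩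

theorem integral_waveMode (a : ℤ × ℤ) :
    ∫ z in waveRect, waveMode a z = if a = 0 then ((2 * π ^ 2 : ℝ) : ℂ) else 0 := by
  split_ifs with h
  · subst h
    simp only [waveMode, Prod.fst_zero, Prod.snd_zero, Int.cast_zero, mul_zero, zero_mul, add_zero,
      Complex.exp_zero, integral_const, measureReal_restrict_waveRect_univ, Complex.real_smul,
      mul_one]
  · have hprod : ∫ z in waveRect, waveMode a z =
        (∫ x in Set.Icc (0 : ℝ) π, Complex.exp (Complex.I * ((2 * a.1 : ℤ) * x))) *
        ∫ t in Set.Icc (0 : ℝ) (2 * π), Complex.exp (Complex.I * (a.2 * t)) := by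
      rw [← setIntegral_prod_mul, waveRect, Measure.volume_eq_prod]
      congr 1
      ext z
      rw [waveMode, ← Complex.exp_add]
      push_cast
      ring_nf
    rw [hprod]
    by_cases h1 : a.1 = 0
    · have h2 : a.2 ≠ 0 := fun h2 => h (Prod.ext h1 h2)
      rw [integral_exp_int_mul a.2 h2 _ (by positivity) ⟨a.2, rfl⟩, mul_zero]
    · rw [integral_exp_int_mul (2 * a.1) (by simpa using h1) _ (by positivity)
        ⟨a.1, by push_cast; ring⟩, zero_mul]

theorem integral_tsum_waveMode_mul (g : ℤ × ℤ → ℂ) (hg : Summable fun a => ‖g a‖)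
    (h : ℝ × ℝ → ℂ) (hc : Continuous h) (B : ℝ) (hB : ∀ z, ‖h z‖ ≤ B) :
    ∫ z in waveRect, (∑' a, g a * waveMode a z) * h z =
      ∑' a, g a * ∫ z in waveRect, waveMode a z * h z := by
  have hintegrable : ∀ a, Integrable (fun z => g a * (waveMode a z * h z)) (volume.restrict waveRect) := by
    intro a
    refine Integrable.of_bound (C := ‖g a‖ * B)
      ((continuous_const.mul ((waveMode_continuous a).mul hc)).aestronglyMeasurable)
      (.of_forall fun z => ?_)
    rw [norm_mul, norm_mul, waveMode_norm, one_mul]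
    exact mul_le_mul_of_nonneg_left (hB z) (norm_nonneg _)
  simp only [← integral_const_mul]
  rw [integral_tsum_of_summable_integral_norm hintegrable]
  · congr 1
    ext z
    rw [← tsum_mul_right]
    simp only [mul_assoc]
  · refine Summable.of_nonneg_of_le (fun a => integral_nonneg fun z => norm_nonneg _) (fun a => ?_)
      (hg.mul_right (B * (2 * π ^ 2)))
    calc ∫ z in waveRect, ‖g a * (waveMode a z * h z)‖
        ≤ ∫ z in waveRect, ‖g a‖ * B := by
          refine integral_mono (hintegrable a).norm (integrable_const _) fun z => ?_
          simp only [norm_mul, waveMode_norm, one_mul]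
          exact mul_le_mul_of_nonneg_left (hB z) (norm_nonneg _)
      _ = _ := by
          rw [integral_const, measureReal_restrict_waveRect_univ, smul_eq_mul]
          ring

theorem continuous_tsum_waveMode (g : ℤ × ℤ → ℂ) (hg : Summable fun a => ‖g a‖) :
    Continuous fun z => ∑' a, g a * waveMode a z :=
  continuous_tsum (fun a => continuous_const.mul (waveMode_continuous a)) hg fun a z => by
    rw [norm_mul, waveMode_norm, mul_one]

theorem norm_tsum_waveMode_le (g : ℤ × ℤ → ℂ) (hg : Summable fun a => ‖g a‖) (z : ℝ × ℝ) :
    ‖∑' a, g a * waveMode a z‖ ≤ ∑' a, ‖g a‖ :=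
  tsum_of_norm_bounded hg.hasSum fun a => by rw [norm_mul, waveMode_norm, mul_one]

/-- Parseval's identity on the rectangle. -/
theorem integral_norm_sq_tsum_waveMode (g : ℤ × ℤ → ℂ) (hg : Summable fun a => ‖g a‖) :
    ∫ z in waveRect, ‖∑' a, g a * waveMode a z‖ ^ 2 = 2 * π ^ 2 * ∑' a, ‖g a‖ ^ 2 := by
  have hcoeff : ∀ b, ∫ z in waveRect,
      (∑' a, g a * waveMode a z) * (starRingEnd ℂ) (waveMode b z) = g b * (2 * π ^ 2 : ℝ) := by
    intro b
    rw [integral_tsum_waveMode_mul g hg (fun z => (starRingEnd ℂ) (waveMode b z))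
      (Complex.continuous_conj.comp (waveMode_continuous b)) 1
      (fun z => by rw [RCLike.norm_conj, waveMode_norm])]
    simp only [waveMode_mul_conj, integral_waveMode, sub_eq_zero]
    rw [tsum_eq_single b fun a ha => by simp [ha]]
    simp
  have hmain : ∫ z in waveRect, (∑' a, g a * waveMode a z) *
      (starRingEnd ℂ) (∑' a, g a * waveMode a z) = ∑' a, (2 * π ^ 2 * ‖g a‖ ^ 2 : ℝ) := by
    rw [integral_tsum_waveMode_mul g hg
      (fun z => (starRingEnd ℂ) (∑' a, g a * waveMode a z))
      (Complex.continuous_conj.comp (continuous_tsum_waveMode g hg)) _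
      (fun z => by rw [RCLike.norm_conj]; exact norm_tsum_waveMode_le g hg z)]
    rw [Complex.ofReal_tsum]
    congr 1
    ext b
    have : ∫ z in waveRect, waveMode b z * (starRingEnd ℂ) (∑' a, g a * waveMode a z) =
        (starRingEnd ℂ) (g b * (2 * π ^ 2 : ℝ)) := by
      rw [← hcoeff b, ← integral_conj]
      congr 1
      ext z
      simp [mul_comm]
    rw [this, map_mul, Complex.conj_ofReal, ← mul_assoc, Complex.mul_conj']
    push_cast
    ring
  simp only [Complex.mul_conj'] at hmain
  rw [← tsum_mul_left]
  have h2 := congrArg Complex.re hmain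
  rw [Complex.ofReal_re] at h2
  rw [← h2, ← Complex.ofReal_re (∫ z in waveRect, ‖∑' a, g a * waveMode a z‖ ^ 2),
    ← integral_complex_ofReal]
  push_cast
  rfl

theorem sum_range_rpow_neg_le (s : ℝ) (hs0 : 0 < s) (hs1 : s < 1) (N : ℕ) :
    ∑ i ∈ Finset.range N, ((i : ℝ) + 1) ^ (-s) ≤ (N : ℝ) ^ (1 - s) / (1 - s) := by
  have h1s : 0 < 1 - s := by linarith
  induction N with
  | zero => simp [Real.zero_rpow h1s.ne']
  | succ n ih =>
    rw [Finset.sum_range_succ]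
    have hn : (0 : ℝ) < n + 1 := by positivity
    have hb := _root_.rpow_one_add_le_one_add_mul_self (s := -1 / ((n : ℝ) + 1)) (p := 1 - s)
      (by rw [le_div_iff₀ hn]; linarith [n.cast_nonneg (α := ℝ)]) h1s.le (by linarith)
    have he : 1 + -1 / ((n : ℝ) + 1) = n / (n + 1) := by field_simp; ring
    rw [he, Real.div_rpow (by positivity) hn.le, div_le_iff₀ (by positivity)] at hb
    have hr : ((n : ℝ) + 1) ^ (1 - s) = (n + 1) * ((n : ℝ) + 1) ^ (-s) := by
      rw [sub_eq_add_neg, Real.rpow_add hn, Real.rpow_one]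
    have hb' : (n : ℝ) ^ (1 - s) ≤ ((n : ℝ) + 1) ^ (1 - s) - (1 - s) * ((n : ℝ) + 1) ^ (-s) := by
      refine hb.trans (le_of_eq ?_)
      rw [hr]; field_simp; ring
    push_cast
    rw [le_div_iff₀ h1s] at ih ⊢
    linarith

theorem waveWeight_eq (a : ℤ × ℤ) :
    waveWeight a = |((a.2 - 2 * a.1 : ℤ) : ℝ)| * |((a.2 + 2 * a.1 : ℤ) : ℝ)| := by
  rw [waveWeight, ← abs_mul]
  push_cast
  ring_nf

theorem waveWeight_nonneg (a : ℤ × ℤ) : 0 ≤ waveWeight a := by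
  rw [waveWeight_eq]; positivity

/-- The nonzero integers of absolute value at most `N`. -/
noncomputable def nonzeroBall (N : ℕ) : Finset ℤ := (Finset.Icc (-N : ℤ) N).erase 0

theorem sum_nonzeroBall_le (s : ℝ) (hs0 : 0 < s) (hs1 : s < 1) (N : ℕ) :
    ∑ m ∈ nonzeroBall N, |(m : ℝ)| ^ (-s) ≤ 2 / (1 - s) * (N : ℝ) ^ (1 - s) := by
  have heq : nonzeroBall N = (Finset.range N).image (fun i : ℕ => (i + 1 : ℤ)) ∪
      (Finset.range N).image (fun i : ℕ => -(i + 1 : ℤ)) := by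
    ext m
    simp only [nonzeroBall, Finset.mem_erase, Finset.mem_Icc, Finset.mem_union, Finset.mem_image,
      Finset.mem_range]
    constructor
    · rintro ⟨h0, h1, h2⟩
      rcases lt_or_gt_of_ne h0 with h | h
      · exact Or.inr ⟨(-m - 1).toNat, by omega, by omega⟩
      · exact Or.inl ⟨(m - 1).toNat, by omega, by omega⟩
    · rintro (⟨i, h, rfl⟩ | ⟨i, h, rfl⟩) <;> omega
  have hdisj : Disjoint ((Finset.range N).image (fun i : ℕ => (i + 1 : ℤ)))
      ((Finset.range N).image (fun i : ℕ => -(i + 1 : ℤ))) := by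
    rw [Finset.disjoint_left]
    simp only [Finset.mem_image]
    rintro m ⟨i, _, rfl⟩ ⟨j, _, h⟩
    omega
  have habs : ∀ i : ℕ, |(i : ℝ) + 1| = i + 1 := fun i => abs_of_pos (by positivity)
  rw [heq, Finset.sum_union hdisj, Finset.sum_image (by intro i _ j _ h; simpa using h),
    Finset.sum_image (by intro i _ j _ h; simpa using h)]
  have := sum_range_rpow_neg_le s hs0 hs1 N
  push_cast
  simp only [abs_neg, habs]
  rw [div_mul_eq_mul_div]
  rw [le_div_iff₀ (by linarith)] at this ⊢
  linarith

theorem sum_waveWeight_rpow_neg_le (s : ℝ) (hs0 : 0 < s) (hs1 : s < 1) (A : ℝ)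
    (T : Finset (ℤ × ℤ)) (hT : ∀ a ∈ T, 0 < waveWeight a ∧ waveWeight a ≤ A) :
    ∑ a ∈ T, waveWeight a ^ (-s) ≤ (2 / (1 - s) * A ^ (1 - s)) ^ 2 := by
  rcases T.eq_empty_or_nonempty with rfl | ⟨a₀, ha₀⟩
  · simp only [Finset.sum_empty]; positivity
  have hA : 0 < A := (hT a₀ ha₀).1.trans_le (hT a₀ ha₀).2
  have h1s : 0 < 1 - s := by linarith
  set N := ⌊A⌋₊ with hN
  let φ : ℤ × ℤ → ℤ × ℤ := fun a => (a.2 - 2 * a.1, a.2 + 2 * a.1)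
  have hφ : Function.Injective φ := by
    rintro ⟨a, b⟩ ⟨c, d⟩ h
    simp only [φ, Prod.mk.injEq] at h ⊢
    omega
  have hmem : ∀ m n : ℤ, 0 < |(m : ℝ)| * |(n : ℝ)| → |(m : ℝ)| * |(n : ℝ)| ≤ A →
      m ∈ nonzeroBall N := by
    intro m n h0 h1
    have hm : m ≠ 0 := by rintro rfl; simp at h0
    have hn : n ≠ 0 := by rintro rfl; simp at h0
    have hn1 : (1 : ℝ) ≤ |(n : ℝ)| := by exact_mod_cast Int.one_le_abs hn
    have hmA : |(m : ℝ)| ≤ A := by nlinarith [abs_nonneg (m : ℝ)]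
    have : m.natAbs ≤ N := Nat.le_floor (by rwa [Nat.cast_natAbs, Int.cast_abs])
    simp only [nonzeroBall, Finset.mem_erase, Finset.mem_Icc]
    omega
  calc ∑ a ∈ T, waveWeight a ^ (-s)
      = ∑ b ∈ T.image φ, |(b.1 : ℝ)| ^ (-s) * |(b.2 : ℝ)| ^ (-s) := by
        rw [Finset.sum_image hφ.injOn]
        refine Finset.sum_congr rfl fun a _ => ?_
        rw [waveWeight_eq, Real.mul_rpow (abs_nonneg _) (abs_nonneg _)]
    _ ≤ ∑ b ∈ nonzeroBall N ×ˢ nonzeroBall N, |(b.1 : ℝ)| ^ (-s) * |(b.2 : ℝ)| ^ (-s) := by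
        refine Finset.sum_le_sum_of_subset_of_nonneg ?_ fun _ _ _ => by positivity
        intro b hb
        obtain ⟨a, ha, rfl⟩ := Finset.mem_image.1 hb
        have h := hT a ha
        rw [waveWeight_eq] at h
        exact Finset.mem_product.2 ⟨hmem _ _ h.1 h.2,
          hmem _ _ (by rw [mul_comm]; exact h.1) (by rw [mul_comm]; exact h.2)⟩
    _ = (∑ m ∈ nonzeroBall N, |(m : ℝ)| ^ (-s)) ^ 2 := by
        rw [sq, Finset.sum_mul_sum, Finset.sum_product]
    _ ≤ (2 / (1 - s) * A ^ (1 - s)) ^ 2 := by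
        refine pow_le_pow_left₀ (Finset.sum_nonneg fun _ _ => by positivity) ?_ 2
        refine (sum_nonzeroBall_le s hs0 hs1 N).trans ?_
        gcongr
        exact Nat.floor_le hA.le

/-- Coefficients supported where the weight is at most `A` are absolutely summable, with sum
controlled by the energy. -/
theorem tsum_norm_le_of_waveWeight_le (s : ℝ) (hs0 : 0 < s) (hs1 : s < 1) (A : ℝ) (hA : 0 ≤ A)
    (g : ℤ × ℤ → ℂ) (hg : ∀ a, g a ≠ 0 → 0 < waveWeight a ∧ waveWeight a ≤ A) (S : ℝ)
    (hS : ∀ T : Finset (ℤ × ℤ), ∑ a ∈ T, waveWeight a ^ s * ‖g a‖ ^ 2 ≤ S) :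
    ∑' a, ‖g a‖ ≤ 2 / (1 - s) * A ^ (1 - s) * √S := by
  have h1s : 0 < 1 - s := by linarith
  have hS0 : 0 ≤ S := by simpa using hS ∅
  refine Real.tsum_le_of_sum_le (fun a => norm_nonneg _) fun T => ?_
  have hsum : ∑ a ∈ T, ‖g a‖ = ∑ a ∈ T with g a ≠ 0, ‖g a‖ := by
    rw [Finset.sum_filter_of_ne]
    intro a _ h
    simpa using h
  have hcs := Finset.sum_sq_le_sum_mul_sum_of_sq_le_mul ({a ∈ T | g a ≠ 0})
    (r := fun a => ‖g a‖) (f := fun a => waveWeight a ^ (-s))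
    (g := fun a => waveWeight a ^ s * ‖g a‖ ^ 2)
    (fun a _ => Real.rpow_nonneg (waveWeight_nonneg a) _)
    (fun a _ => mul_nonneg (Real.rpow_nonneg (waveWeight_nonneg a) _) (by positivity))
    (fun a ha => by
      have := (hg a (Finset.mem_filter.1 ha).2).1
      rw [← mul_assoc, ← Real.rpow_add this]
      simp)
  rw [hsum]
  refine abs_le_of_sq_le_sq' ?_ (by positivity) |>.2
  refine hcs.trans ?_
  rw [mul_pow, Real.sq_sqrt hS0]
  refine mul_le_mul (sum_waveWeight_rpow_neg_le s hs0 hs1 A _ fun a ha =>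
    hg a (Finset.mem_filter.1 ha).2) (hS _)
    (Finset.sum_nonneg fun a _ => mul_nonneg (Real.rpow_nonneg (waveWeight_nonneg a) _)
      (by positivity)) (by positivity)

/-- Chebyshev's inequality for a trigonometric series that is at most `t / 2` in sup norm away from
the series with coefficients `h`. -/
theorem measure_lt_norm_tsum_waveMode_le (g h : ℤ × ℤ → ℂ) (hg : Summable fun a => ‖g a‖)
    (hh : Summable fun a => ‖h a‖) (t : ℝ) (ht : 0 < t) (hgh : ∑' a, ‖g a - h a‖ ≤ t / 2) :
    volume.restrict waveRect {z | t < ‖∑' a, g a * waveMode a z‖} ≤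
      ENNReal.ofReal (8 * π ^ 2 * t ^ (-2 : ℝ)) * ∑' a, ENNReal.ofReal (‖h a‖ ^ 2) := by
  have hsub : Summable fun a => ‖g a - h a‖ :=
    (hg.add hh).of_nonneg_of_le (fun _ => norm_nonneg _) fun _ => norm_sub_le _ _
  have hmode : ∀ k : ℤ × ℤ → ℂ, (Summable fun a => ‖k a‖) → ∀ z,
      Summable fun a => k a * waveMode a z := fun k hk z =>
    Summable.of_norm (by simpa only [norm_mul, waveMode_norm, mul_one] using hk)
  have hsq : Summable fun a => ‖h a‖ ^ 2 := by
    refine (hh.mul_left (∑' b, ‖h b‖)).of_nonneg_of_le (fun _ => by positivity) fun a => ?_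
    rw [sq]
    exact mul_le_mul_of_nonneg_right (hh.le_tsum a fun _ _ => norm_nonneg _) (norm_nonneg _)
  set F : ℝ × ℝ → ℂ := fun z => ∑' a, h a * waveMode a z with hF
  have hFc : Continuous F := continuous_tsum_waveMode h hh
  have hincl : {z | t < ‖∑' a, g a * waveMode a z‖} ⊆
      {z | ENNReal.ofReal ((t / 2) ^ 2) ≤ ENNReal.ofReal (‖F z‖ ^ 2)} := by
    intro z hz
    simp only [Set.mem_ofPred_eq] at hz ⊢
    refine ENNReal.ofReal_le_ofReal (pow_le_pow_left₀ (by positivity) ?_ 2)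
    have h1 := norm_tsum_waveMode_le (fun a => g a - h a) hsub z
    simp only [sub_mul] at h1
    rw [(hmode g hg z).tsum_sub (hmode h hh z)] at h1
    have h2 := norm_sub_norm_le (∑' a, g a * waveMode a z) (F z)
    linarith
  have hmk := mul_meas_ge_le_lintegral₀ (μ := volume.restrict waveRect)
    (f := fun z => ENNReal.ofReal (‖F z‖ ^ 2)) (by fun_prop) (ENNReal.ofReal ((t / 2) ^ 2))
  have hintegrable : Integrable (fun z => ‖F z‖ ^ 2) (volume.restrict waveRect) := by
    refine Integrable.of_bound (C := (∑' a, ‖h a‖) ^ 2)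
      (hFc.norm.pow 2).aestronglyMeasurable (.of_forall fun z => ?_)
    rw [norm_pow, norm_norm]
    exact pow_le_pow_left₀ (norm_nonneg _) (norm_tsum_waveMode_le h hh z) 2
  rw [← ofReal_integral_eq_lintegral_ofReal hintegrable (.of_forall fun z => by positivity),
    integral_norm_sq_tsum_waveMode h hh] at hmk
  have ht2 : ENNReal.ofReal ((t / 2) ^ 2) ≠ 0 := by
    simp only [ne_eq, ENNReal.ofReal_eq_zero, not_le]; positivity
  calc volume.restrict waveRect {z | t < ‖∑' a, g a * waveMode a z‖}
      ≤ volume.restrict waveRect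
          {z | ENNReal.ofReal ((t / 2) ^ 2) ≤ ENNReal.ofReal (‖F z‖ ^ 2)} := measure_mono hincl
    _ ≤ ENNReal.ofReal (2 * π ^ 2 * ∑' a, ‖h a‖ ^ 2) / ENNReal.ofReal ((t / 2) ^ 2) := by
        rw [ENNReal.le_div_iff_mul_le (.inl ht2) (.inl ENNReal.ofReal_ne_top), mul_comm]
        exact hmk
    _ = _ := by
        rw [← ENNReal.ofReal_div_of_pos (by positivity),
          ← ENNReal.ofReal_tsum_of_nonneg (fun _ => by positivity) hsq,
          ← ENNReal.ofReal_mul (by positivity), Real.rpow_neg ht.le, Real.rpow_two]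
        congr 1
        field_simp
        ring

theorem lintegral_Ioo_rpow (r R : ℝ) (hr : -1 < r) (hR : 0 ≤ R) :
    ∫⁻ t in Set.Ioo 0 R, ENNReal.ofReal (t ^ r) = ENNReal.ofReal (R ^ (r + 1) / (r + 1)) := by
  have hii := intervalIntegral.intervalIntegrable_rpow' (a := 0) (b := R) hr
  rw [restrict_Ioo_eq_restrict_Ioc, ← ofReal_integral_eq_lintegral_ofReal,
    ← intervalIntegral.integral_of_le hR, integral_rpow (.inl hr)]
  · rw [Real.zero_rpow (by linarith), sub_zero]
  · exact (intervalIntegrable_iff_integrableOn_Ioc_of_le hR).1 hii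
  · filter_upwards [ae_restrict_mem measurableSet_Ioc] with t ht
    exact Real.rpow_nonneg ht.1.le _

/-- The `L^p` bound for absolutely convergent series with nonzero energy. -/
theorem lintegral_norm_rpow_tsum_waveMode_le (s p : ℝ) (hs0 : 0 < s) (hs1 : s < 1)
    (hp : p = (2 - s) / (1 - s)) (g : ℤ × ℤ → ℂ) (hg : Summable fun a => ‖g a‖)
    (hg0 : ∀ a, waveWeight a = 0 → g a = 0)
    (hS : Summable fun a => waveWeight a ^ s * ‖g a‖ ^ 2)
    (hpos : 0 < ∑' a, waveWeight a ^ s * ‖g a‖ ^ 2) :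
    ∫⁻ z in waveRect, ENNReal.ofReal (‖∑' a, g a * waveMode a z‖ ^ p) ≤
      ENNReal.ofReal (p * (8 * π ^ 2 * ((4 / (1 - s)) ^ (p - 2) / (p - 2))) *
        √(∑' a, waveWeight a ^ s * ‖g a‖ ^ 2) ^ p) := by
  have h1s : 0 < 1 - s := by linarith
  have hp2 : p - 2 = s / (1 - s) := by rw [hp]; field_simp; ring
  have hp2' : 0 < p - 2 := by rw [hp2]; positivity
  have hw := waveWeight_nonneg
  set S := ∑' a, waveWeight a ^ s * ‖g a‖ ^ 2 with hSdef
  have hterm : ∀ a, 0 ≤ waveWeight a ^ s * ‖g a‖ ^ 2 := fun a =>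
    mul_nonneg (Real.rpow_nonneg (hw a) _) (by positivity)
  have hsq : 0 < √S := Real.sqrt_pos.2 hpos
  set M := 4 / (1 - s) * √S with hM
  have hMpos : 0 < M := by positivity
  let R : ℤ × ℤ → ℝ := fun a => M * waveWeight a ^ (1 - s)
  have hR : ∀ a, 0 ≤ R a := fun a => mul_nonneg hMpos.le (Real.rpow_nonneg (hw a) _)
  have hRpow : ∀ a, R a ^ (p - 2) = M ^ (p - 2) * waveWeight a ^ s := by
    intro a
    rw [Real.mul_rpow hMpos.le (Real.rpow_nonneg (hw a) _), ← Real.rpow_mul (hw a), hp2,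
      mul_div_cancel₀ _ h1s.ne']
  have hlevel : ∀ t : ℝ, 0 < t →
      volume.restrict waveRect {z | t < ‖∑' a, g a * waveMode a z‖} * ENNReal.ofReal (t ^ (p - 1)) ≤
      ∑' a, ENNReal.ofReal (8 * π ^ 2 * ‖g a‖ ^ 2) *
        (Set.Iio (R a)).indicator (fun u => ENNReal.ofReal (u ^ (p - 3))) t := by
    intro t ht
    let h : ℤ × ℤ → ℂ := fun a => if t < R a then g a else 0
    have hhle : ∀ a, ‖h a‖ ≤ ‖g a‖ := fun a => by
      simp only [h]; split_ifs <;> simp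
    have hdiff : ∀ a, g a - h a = if t < R a then 0 else g a := fun a => by
      simp only [h]; split_ifs <;> simp
    have hlow : ∑' a, ‖g a - h a‖ ≤ t / 2 := by
      have hA : 0 ≤ (t / M) ^ (1 - s)⁻¹ := by positivity
      have hb := tsum_norm_le_of_waveWeight_le s hs0 hs1 ((t / M) ^ (1 - s)⁻¹) hA
        (fun a => g a - h a) (fun a ha => by
          rw [hdiff] at ha
          split_ifs at ha with hlt
          · simp at ha
          refine ⟨(hw a).lt_of_ne fun h0 => ha (hg0 a h0.symm), ?_⟩
          rw [Real.le_rpow_inv_iff_of_pos (hw a) (by positivity) h1s, le_div_iff₀ hMpos, mul_comm]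
          exact not_lt.1 hlt) S (fun T => by
          refine le_trans (Finset.sum_le_sum fun a _ => ?_) (hS.sum_le_tsum T fun a _ => hterm a)
          refine mul_le_mul_of_nonneg_left (pow_le_pow_left₀ (norm_nonneg _) ?_ 2)
            (Real.rpow_nonneg (hw a) _)
          rw [hdiff]
          split_ifs <;> simp)
      refine hb.trans (le_of_eq ?_)
      rw [Real.rpow_inv_rpow (by positivity) h1s.ne', hM]
      field_simp
      norm_num
    have hm := measure_lt_norm_tsum_waveMode_le g h hg
      (hg.of_nonneg_of_le (fun _ => norm_nonneg _) hhle) t ht hlow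
    calc _ ≤ (ENNReal.ofReal (8 * π ^ 2 * t ^ (-2 : ℝ)) * ∑' a, ENNReal.ofReal (‖h a‖ ^ 2)) *
          ENNReal.ofReal (t ^ (p - 1)) := by gcongr
      _ = ∑' a, ENNReal.ofReal (8 * π ^ 2 * t ^ (-2 : ℝ)) * ENNReal.ofReal (‖h a‖ ^ 2) *
          ENNReal.ofReal (t ^ (p - 1)) := by
        rw [← ENNReal.tsum_mul_left, ← ENNReal.tsum_mul_right]
      _ = _ := by
        congr 1
        ext a
        by_cases hlt : t < R a
        · rw [Set.indicator_of_mem (Set.mem_Iio.2 hlt), ← ENNReal.ofReal_mul (by positivity),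
            ← ENNReal.ofReal_mul (by positivity), ← ENNReal.ofReal_mul (by positivity)]
          simp only [h, hlt, if_true]
          rw [show p - 3 = -2 + (p - 1) by ring, Real.rpow_add ht]
          congr 1
          ring
        · rw [Set.indicator_of_notMem (by simpa using hlt)]
          simp [h, hlt]
  have hcont := continuous_tsum_waveMode g hg
  rw [lintegral_rpow_eq_lintegral_meas_lt_mul _ (.of_forall fun z => norm_nonneg _)
    hcont.norm.aemeasurable (by linarith : 0 < p)]
  have hmeas : Measurable fun u : ℝ => ENNReal.ofReal (u ^ (p - 3)) := by fun_prop
  calc _ ≤ ENNReal.ofReal p * ∫⁻ t in Set.Ioi 0, ∑' a, ENNReal.ofReal (8 * π ^ 2 * ‖g a‖ ^ 2) *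
          (Set.Iio (R a)).indicator (fun u => ENNReal.ofReal (u ^ (p - 3))) t := by
        gcongr 1
        exact setLIntegral_mono' measurableSet_Ioi fun t ht => hlevel t ht
    _ = ENNReal.ofReal p * ∑' a, ENNReal.ofReal
          (8 * π ^ 2 * (M ^ (p - 2) / (p - 2)) * (waveWeight a ^ s * ‖g a‖ ^ 2)) := by
        rw [lintegral_tsum fun a =>
          ((hmeas.indicator measurableSet_Iio).const_mul _).aemeasurable]
        congr 2
        ext a
        rw [lintegral_const_mul _ (hmeas.indicator measurableSet_Iio),
          lintegral_indicator measurableSet_Iio, Measure.restrict_restrict measurableSet_Iio,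
          Set.inter_comm, Set.Ioi_inter_Iio, lintegral_Ioo_rpow _ _ (by linarith) (hR a),
          ← ENNReal.ofReal_mul (by positivity), show p - 3 + 1 = p - 2 by ring, hRpow]
        congr 1
        ring
    _ = ENNReal.ofReal (p * (8 * π ^ 2 * (M ^ (p - 2) / (p - 2)) * S)) := by
        rw [← ENNReal.ofReal_tsum_of_nonneg (fun a => mul_nonneg (by positivity) (hterm a))
          (hS.mul_left _), tsum_mul_left, ← ENNReal.ofReal_mul (by linarith)]
    _ = _ := by
        congr 1
        have hpow : √S ^ p = √S ^ (p - 2) * S := by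
          conv_rhs => rw [← Real.sq_sqrt hpos.le, Real.sqrt_sq hsq.le, ← Real.rpow_two,
            ← Real.rpow_add hsq]
          ring_nf
        rw [hpow, hM, Real.mul_rpow (by positivity) hsq.le]
        ring

/-- Fractional Sobolev embedding E^s ⊂ L^p on Q = [0,π]×[0,2π] with p = (2−s)/(1−s):
‖f‖_{L^p(Q)} ≤ c(p) ‖f‖_{E^s}. -/
theorem stmt_6 (s p : ℝ) (hs0 : 0 < s) (hs1 : s < 1) (hp : p = (2 - s) / (1 - s)) :
    ∃ c > 0, ∀ fh : ℤ × ℤ → ℂ,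
      (∀ j k : ℤ, (2 * j = k ∨ 2 * j = -k) → fh (j, k) = 0) →
      Summable (fun jk : ℤ × ℤ =>
        ((|jk.2 ^ 2 - 4 * jk.1 ^ 2| : ℤ) : ℝ) ^ s * ‖fh jk‖ ^ 2) →
      ∀ f : ℝ × ℝ → ℂ,
        (∀ x t : ℝ, f (x, t) = ∑' jk : ℤ × ℤ,
          fh jk * Complex.exp (Complex.I * (2 * jk.1 * x + jk.2 * t))) →
        ∫ z in Set.Icc (0 : ℝ) Real.pi ×ˢ Set.Icc (0 : ℝ) (2 * Real.pi), ‖f z‖ ^ p ≤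
          (c * Real.sqrt (∑' jk : ℤ × ℤ,
            ((|jk.2 ^ 2 - 4 * jk.1 ^ 2| : ℤ) : ℝ) ^ s * ‖fh jk‖ ^ 2)) ^ p := by
  have h1s : 0 < 1 - s := by linarith
  have hp2 : 0 < p - 2 := by
    rw [show p - 2 = s / (1 - s) by rw [hp]; field_simp; ring]
    positivity
  have hp0 : 0 < p := by linarith
  set C := p * (8 * π ^ 2 * ((4 / (1 - s)) ^ (p - 2) / (p - 2))) with hC
  have hCpos : 0 < C := by positivity
  refine ⟨C ^ p⁻¹, by positivity, fun fh hfh hS f hf => ?_⟩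
  have hf' : ∀ z, f z = ∑' a, fh a * waveMode a z := fun z => hf z.1 z.2
  have hg0 : ∀ a, waveWeight a = 0 → fh a = 0 := by
    rintro ⟨j, k⟩ h
    refine hfh j k ?_
    rw [waveWeight_eq, mul_eq_zero, abs_eq_zero, abs_eq_zero, Int.cast_eq_zero,
      Int.cast_eq_zero] at h
    dsimp only at h
    omega
  have hzero : (∀ z, f z = 0) →
      ∫ z in Set.Icc (0 : ℝ) Real.pi ×ˢ Set.Icc (0 : ℝ) (2 * Real.pi), ‖f z‖ ^ p ≤
          (C ^ p⁻¹ * √(∑' a, waveWeight a ^ s * ‖fh a‖ ^ 2)) ^ p := by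
    intro h
    simp only [h, norm_zero, Real.zero_rpow hp0.ne', integral_zero]
    positivity
  by_cases hsum : Summable fun a => ‖fh a‖
  swap
  · refine hzero fun z => ?_
    rw [hf', tsum_eq_zero_of_not_summable]
    intro h
    exact hsum (by simpa only [norm_mul, waveMode_norm, mul_one] using h.norm)
  have hterm : ∀ a, 0 ≤ waveWeight a ^ s * ‖fh a‖ ^ 2 := fun a =>
    mul_nonneg (Real.rpow_nonneg (waveWeight_nonneg a) _) (by positivity)
  rcases (tsum_nonneg hterm).eq_or_lt with h0 | hpos
  · refine hzero fun z => ?_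
    have hz := (hasSum_zero_iff_of_nonneg hterm).1 (h0 ▸ hS.hasSum)
    have : ∀ a, fh a = 0 := by
      intro a
      have ha := congrFun hz a
      by_cases hw : waveWeight a = 0
      · exact hg0 a hw
      · have := (Real.rpow_pos_of_pos ((waveWeight_nonneg a).lt_of_ne' hw) s).ne'
        simpa [this] using ha
    simp [hf', this]
  · have hmain := lintegral_norm_rpow_tsum_waveMode_le s p hs0 hs1 hp fh hsum hg0 hS hpos
    change ∫ z in waveRect, ‖f z‖ ^ p ≤ (C ^ p⁻¹ * √(∑' a, waveWeight a ^ s * ‖fh a‖ ^ 2)) ^ p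
    rw [Real.mul_rpow (by positivity) (by positivity), Real.rpow_inv_rpow hCpos.le hp0.ne']
    simp only [hf']
    rw [integral_eq_lintegral_of_nonneg_ae (.of_forall fun z => by positivity)
      ((continuous_tsum_waveMode fh hsum).norm.rpow_const
        fun _ => .inr hp0.le).aestronglyMeasurable]
    exact ENNReal.toReal_le_of_le_ofReal (by positivity) hmain
end

section
/- Interpolation: for 0 < s < 1 and any f with Fourier support in {2j ≠ ±k}, ‖f‖_{E^s} ≤ ‖f‖_{L²}^{1−s} ‖f‖_{E¹}^{s}, where ‖f‖²_{E¹} = Σ_{2j≠±k} |k² − 4j²| |f̂(j,k)|². Consequently, for p > 2 and s(p) = (p−2)/(p−1), ‖f‖_{L^p(Q)} ≤ c(p) ‖f‖_{L²}^{1−s(p)} ‖f‖_{E¹}^{s(p)} (a Gagliardo–Nirenberg type inequality for the d'Alembertian). -/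
open Real Complex MeasureTheory

/-- The absolute value `|k² - 4j²|` of the wave operator symbol at the frequency `(j, k)`. -/
noncomputable def dalembertSymbol (q : ℤ × ℤ) : ℝ := ((|q.2 ^ 2 - 4 * q.1 ^ 2| : ℤ) : ℝ)

lemma dalembertSymbol_nonneg (q : ℤ × ℤ) : 0 ≤ dalembertSymbol q := by
  unfold dalembertSymbol; exact_mod_cast abs_nonneg _

lemma dalembertSymbol_eq_zero_or_one_le (q : ℤ × ℤ) :
    dalembertSymbol q = 0 ∨ 1 ≤ dalembertSymbol q := by
  unfold dalembertSymbol
  rcases (abs_nonneg (q.2 ^ 2 - 4 * q.1 ^ 2)).eq_or_lt with h | h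
  · left; exact_mod_cast h.symm
  · right; exact_mod_cast h

lemma one_le_dalembertSymbol {q : ℤ × ℤ} (h : ¬(2 * q.1 = q.2 ∨ 2 * q.1 = -q.2)) :
    1 ≤ dalembertSymbol q := by
  refine (dalembertSymbol_eq_zero_or_one_le q).resolve_left fun h0 => h ?_
  unfold dalembertSymbol at h0
  have h1 : q.2 ^ 2 - 4 * q.1 ^ 2 = 0 := abs_eq_zero.mp (by exact_mod_cast h0)
  exact sq_eq_sq_iff_eq_or_eq_neg.mp (by linear_combination -h1)

lemma summable_dalembertSymbol_rpow {σ : ℝ} (hσ : 1 < σ) :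
    Summable fun q : ℤ × ℤ => dalembertSymbol q ^ (-σ) := by
  have h1 := Real.summable_abs_int_rpow hσ
  have h2 := h1.mul_of_nonneg h1 (fun _ => by positivity) (fun _ => by positivity)
  have hinj : Function.Injective fun q : ℤ × ℤ => (q.2 - 2 * q.1, q.2 + 2 * q.1) := by
    rintro ⟨a, b⟩ ⟨c, d⟩ h
    simp only [Prod.mk.injEq] at h ⊢
    omega
  refine (h2.comp_injective hinj).congr fun q => ?_
  simp only [Function.comp, dalembertSymbol]
  rw [← Real.mul_rpow (abs_nonneg _) (abs_nonneg _), ← abs_mul]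
  congr 1
  push_cast
  congr 1
  ring

/-- Hölder interpolation between the weights `1` and `w`. -/
lemma tsum_rpow_mul_le {ι : Type*} {w a : ι → ℝ} (hw : ∀ i, 0 ≤ w i) (ha : ∀ i, 0 ≤ a i)
    (hsa : Summable a) (hswa : Summable fun i => w i * a i) {s : ℝ} (hs0 : 0 < s) (hs1 : s < 1) :
    Summable (fun i => w i ^ s * a i) ∧
      ∑' i, w i ^ s * a i ≤ (∑' i, a i) ^ (1 - s) * (∑' i, w i * a i) ^ s := by
  have h1s : 0 < 1 - s := by linarith
  have key : ∀ i, (w i * a i) ^ s * a i ^ (1 - s) = w i ^ s * a i := fun i => by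
    rw [Real.mul_rpow (hw i) (ha i), mul_assoc, ← Real.rpow_add' (ha i) (by simp)]
    simp
  have hpq : (1 / s).HolderConjugate (1 / (1 - s)) := by
    rw [Real.holderConjugate_iff]
    refine ⟨by rw [lt_div_iff₀ hs0]; linarith, by simp⟩
  have hwa : ∀ i, 0 ≤ w i * a i := fun i => mul_nonneg (hw i) (ha i)
  have e1 : ∀ i, ((w i * a i) ^ s) ^ (1 / s) = w i * a i := fun i => by
    rw [← Real.rpow_mul (hwa i), mul_one_div_cancel hs0.ne', Real.rpow_one]
  have e2 : ∀ i, (a i ^ (1 - s)) ^ (1 / (1 - s)) = a i := fun i => by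
    rw [← Real.rpow_mul (ha i), mul_one_div_cancel h1s.ne', Real.rpow_one]
  have := Real.summable_and_inner_le_Lp_mul_Lq_tsum_of_nonneg hpq
    (f := fun i => (w i * a i) ^ s) (g := fun i => a i ^ (1 - s))
    (fun i => Real.rpow_nonneg (hwa i) _) (fun i => Real.rpow_nonneg (ha i) _)
    (by simpa only [e1] using hswa) (by simpa only [e2] using hsa)
  simp only [key, e1, e2, one_div_one_div] at this
  exact ⟨this.1, this.2.trans_eq (mul_comm _ _)⟩

lemma sqrt_rpow_eq {x : ℝ} (hx : 0 ≤ x) (s : ℝ) : √x ^ s = √(x ^ s) := by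
  rw [Real.sqrt_eq_rpow, Real.sqrt_eq_rpow, ← Real.rpow_mul hx, ← Real.rpow_mul hx, mul_comm]

lemma sqrt_tsum_rpow_mul_le {ι : Type*} {w a : ι → ℝ} (hw : ∀ i, 0 ≤ w i) (ha : ∀ i, 0 ≤ a i)
    (hsa : Summable a) (hswa : Summable fun i => w i * a i) {s : ℝ} (hs0 : 0 < s) (hs1 : s < 1) :
    √(∑' i, w i ^ s * a i) ≤ √(∑' i, a i) ^ (1 - s) * √(∑' i, w i * a i) ^ s := by
  have hA : 0 ≤ ∑' i, a i := tsum_nonneg ha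
  have hB : 0 ≤ ∑' i, w i * a i := tsum_nonneg fun i => mul_nonneg (hw i) (ha i)
  rw [sqrt_rpow_eq hA, sqrt_rpow_eq hB, ← Real.sqrt_mul (Real.rpow_nonneg hA _)]
  exact Real.sqrt_le_sqrt (tsum_rpow_mul_le hw ha hsa hswa hs0 hs1).2

/-- The exponential `exp (i (2 j x + k t))`. -/
noncomputable def torusMode (q : ℤ × ℤ) (z : ℝ × ℝ) : ℂ :=
  Complex.exp (Complex.I * (2 * q.1 * z.1 + q.2 * z.2))

lemma norm_torusMode (q : ℤ × ℤ) (z : ℝ × ℝ) : ‖torusMode q z‖ = 1 := by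
  have := Complex.norm_exp_ofReal_mul_I (2 * q.1 * z.1 + q.2 * z.2)
  rw [torusMode, mul_comm]
  push_cast at this
  exact this

lemma continuous_torusMode (q : ℤ × ℤ) : Continuous (torusMode q) := by
  unfold torusMode; fun_prop

lemma torusMode_mul_conj (q r : ℤ × ℤ) (z : ℝ × ℝ) :
    torusMode q z * (starRingEnd ℂ) (torusMode r z) = torusMode (q - r) z := by
  simp only [torusMode, ← Complex.exp_conj, ← Complex.exp_add]
  congr 1
  simp only [map_mul, map_add, Complex.conj_I, Complex.conj_ofReal, map_ofNat, map_intCast,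
    Prod.fst_sub, Prod.snd_sub, Int.cast_sub]
  ring

/-- The rectangle `[0, π] × [0, 2π]`, a period cell of all the exponentials `torusMode q`. -/
abbrev periodCell : Set (ℝ × ℝ) := Set.Icc 0 π ×ˢ Set.Icc 0 (2 * π)

lemma integral_exp_int_mul_eq_zero {n : ℤ} (hn : n ≠ 0) (c : ℝ) (hc : 0 < c) {a : ℝ} (ha : 0 ≤ a)
    (hac : a * c = 2 * π) : ∫ x in Set.Icc 0 a, Complex.exp (Complex.I * (c * n * x)) = 0 := by
  rw [integral_Icc_eq_integral_Ioc, ← intervalIntegral.integral_of_le ha]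
  have h0 : Complex.I * (c * n) ≠ 0 := by
    have : (c : ℂ) ≠ 0 := by exact_mod_cast hc.ne'
    have : (n : ℂ) ≠ 0 := by exact_mod_cast hn
    simp [*]
  have := integral_exp_mul_complex (a := 0) (b := a) h0
  simp only [← mul_assoc] at this ⊢
  rw [this]
  have hac' : (a : ℂ) * c = 2 * π := by exact_mod_cast hac
  have : Complex.I * c * n * a = n * (2 * π * Complex.I) := by
    rw [← hac']; ring
  rw [this, Complex.exp_int_mul_two_pi_mul_I]
  simp

lemma integral_torusMode (q : ℤ × ℤ) :
    ∫ z in periodCell, torusMode q z = if q = 0 then (2 * π ^ 2 : ℂ) else 0 := by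
  have hsplit : ∀ z : ℝ × ℝ, torusMode q z =
      Complex.exp (Complex.I * ((2 : ℝ) * q.1 * z.1)) *
        Complex.exp (Complex.I * ((1 : ℝ) * q.2 * z.2)) := fun z => by
    rw [torusMode, ← Complex.exp_add]; congr 1; push_cast; ring
  simp only [hsplit]
  rw [Measure.volume_eq_prod, setIntegral_prod_mul
    (fun x : ℝ => Complex.exp (Complex.I * ((2 : ℝ) * q.1 * x)))
    (fun t : ℝ => Complex.exp (Complex.I * ((1 : ℝ) * q.2 * t)))]
  have hpi := Real.pi_pos
  split_ifs with h
  · subst h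
    simp [hpi.le]
    ring
  · by_cases h1 : q.1 = 0
    · have h2 : q.2 ≠ 0 := fun h2 => h (Prod.ext h1 h2)
      rw [integral_exp_int_mul_eq_zero h2 1 one_pos (by positivity) (by ring), mul_zero]
    · rw [integral_exp_int_mul_eq_zero h1 2 two_pos hpi.le (by ring), zero_mul]

lemma isCompact_periodCell : IsCompact periodCell := isCompact_Icc.prod isCompact_Icc

/-- The Parseval identity for trigonometric polynomials. -/
lemma integral_norm_sum_torusMode_sq (T : Finset (ℤ × ℤ)) (a : ℤ × ℤ → ℂ) :
    ∫ z in periodCell, ‖∑ q ∈ T, a q * torusMode q z‖ ^ 2 = 2 * π ^ 2 * ∑ q ∈ T, ‖a q‖ ^ 2 := by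
  rw [← Complex.ofReal_inj, ← integral_complex_ofReal]
  have hpt : ∀ z, ((‖∑ q ∈ T, a q * torusMode q z‖ ^ 2 : ℝ) : ℂ) =
      ∑ q ∈ T, ∑ r ∈ T, a q * (starRingEnd ℂ) (a r) * torusMode (q - r) z := fun z => by
    push_cast
    rw [← Complex.mul_conj', map_sum, Finset.sum_mul_sum]
    refine Finset.sum_congr rfl fun q _ => Finset.sum_congr rfl fun r _ => ?_
    rw [map_mul, ← torusMode_mul_conj]
    ring
  have hint : ∀ q (c : ℂ), Integrable (fun z => c * torusMode q z) (volume.restrict periodCell) :=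
    fun q c => (continuous_const.mul (continuous_torusMode q)).continuousOn.integrableOn_compact
      isCompact_periodCell
  simp only [hpt]
  rw [integral_finsetSum _ fun q _ => integrable_finsetSum _ fun r _ => hint _ _]
  push_cast
  rw [Finset.mul_sum]
  refine Finset.sum_congr rfl fun q hq => ?_
  rw [integral_finsetSum _ fun r _ => hint _ _]
  simp only [integral_const_mul, integral_torusMode, sub_eq_zero, mul_ite, mul_zero]
  rw [Finset.sum_ite_eq, if_pos hq, Complex.mul_conj']
  ring

instance isFiniteMeasure_restrict_periodCell : IsFiniteMeasure (volume.restrict periodCell) :=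
  ⟨by simpa using isCompact_periodCell.measure_lt_top⟩

/-- The Minkowski inequality for finite sums, in terms of integrals of `p`-th powers. -/
lemma integral_norm_sum_rpow_le {α ι E : Type*} [MeasurableSpace α] [NormedAddCommGroup E]
    {μ : Measure α} {p : ℝ} (hp : 1 ≤ p) (s : Finset ι) {g : ι → α → E} {B : ι → ℝ}
    (hg : ∀ i ∈ s, MemLp (g i) (ENNReal.ofReal p) μ) (hB : ∀ i ∈ s, 0 ≤ B i)
    (h : ∀ i ∈ s, ∫ x, ‖g i x‖ ^ p ∂μ ≤ B i ^ p) :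
    ∫ x, ‖∑ i ∈ s, g i x‖ ^ p ∂μ ≤ (∑ i ∈ s, B i) ^ p := by
  have hp0 : 0 < p := by linarith
  have hpE : ENNReal.ofReal p ≠ 0 := by simpa using hp0
  have htr : (ENNReal.ofReal p).toReal = p := ENNReal.toReal_ofReal hp0.le
  have hsum := memLp_finsetSum' s hg
  have hnn : ∀ f : α → E, 0 ≤ ∫ x, ‖f x‖ ^ p ∂μ := fun f =>
    integral_nonneg fun x => by positivity
  have h1 : eLpNorm (∑ i ∈ s, g i) (ENNReal.ofReal p) μ ≤ ENNReal.ofReal (∑ i ∈ s, B i) := by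
    refine (eLpNorm_sum_le (fun i hi => (hg i hi).1) (by simpa using hp)).trans ?_
    rw [ENNReal.ofReal_sum_of_nonneg hB]
    refine Finset.sum_le_sum fun i hi => ?_
    rw [(hg i hi).eLpNorm_eq_integral_rpow_norm hpE ENNReal.ofReal_ne_top, htr]
    exact ENNReal.ofReal_le_ofReal
      ((Real.rpow_inv_le_iff_of_pos (hnn _) (hB i hi) hp0).2 (h i hi))
  rw [hsum.eLpNorm_eq_integral_rpow_norm hpE ENNReal.ofReal_ne_top, htr,
    ENNReal.ofReal_le_ofReal_iff (Finset.sum_nonneg hB),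
    Real.rpow_inv_le_iff_of_pos (hnn _) (Finset.sum_nonneg hB) hp0] at h1
  simpa using h1

lemma continuous_sum_torusMode (T : Finset (ℤ × ℤ)) (a : ℤ × ℤ → ℂ) :
    Continuous fun z => ∑ q ∈ T, a q * torusMode q z :=
  continuous_finsetSum _ fun q _ => continuous_const.mul (continuous_torusMode q)

lemma norm_sum_torusMode_le (T : Finset (ℤ × ℤ)) (a : ℤ × ℤ → ℂ) (z : ℝ × ℝ) :
    ‖∑ q ∈ T, a q * torusMode q z‖ ≤ ∑ q ∈ T, ‖a q‖ :=
  (norm_sum_le _ _).trans_eq <| Finset.sum_congr rfl fun q _ => by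
    rw [norm_mul, norm_torusMode, mul_one]

lemma memLp_sum_torusMode (T : Finset (ℤ × ℤ)) (a : ℤ × ℤ → ℂ) (p : ENNReal) :
    MemLp (fun z => ∑ q ∈ T, a q * torusMode q z) p (volume.restrict periodCell) :=
  .of_bound (continuous_sum_torusMode T a).aestronglyMeasurable _
    (.of_forall (norm_sum_torusMode_le T a))

lemma integral_norm_sum_torusMode_rpow_le {p M : ℝ} (hp : 2 < p) (T : Finset (ℤ × ℤ))
    (a : ℤ × ℤ → ℂ) (hM : ∑ q ∈ T, ‖a q‖ ≤ M) :
    ∫ z in periodCell, ‖∑ q ∈ T, a q * torusMode q z‖ ^ p ≤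
      M ^ (p - 2) * (2 * π ^ 2 * ∑ q ∈ T, ‖a q‖ ^ 2) := by
  have hcont := (continuous_sum_torusMode T a).norm
  rw [← integral_norm_sum_torusMode_sq, ← integral_const_mul]
  refine integral_mono
    ((hcont.rpow_const fun _ => Or.inr (by linarith)).continuousOn.integrableOn_compact
      isCompact_periodCell)
    ((continuous_const.mul (hcont.pow 2)).continuousOn.integrableOn_compact
      isCompact_periodCell) fun z => ?_
  have h0 := norm_nonneg (∑ q ∈ T, a q * torusMode q z)
  calc ‖∑ q ∈ T, a q * torusMode q z‖ ^ p
      = ‖∑ q ∈ T, a q * torusMode q z‖ ^ (p - 2) * ‖∑ q ∈ T, a q * torusMode q z‖ ^ 2 := by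
        rw [← Real.rpow_natCast, ← Real.rpow_add' h0 (by norm_num; linarith)]
        norm_num
    _ ≤ _ := by
        gcongr
        exact (norm_sum_torusMode_le T a z).trans hM

lemma sum_sq_le_of_weight_ge {ι : Type*} (T : Finset ι) {w a : ι → ℝ} {R s E : ℝ} (hR : 0 < R)
    (hs : 0 ≤ s) (hw : ∀ q ∈ T, R ≤ w q) (hE : ∑ q ∈ T, w q ^ s * a q ^ 2 ≤ E ^ 2) :
    ∑ q ∈ T, a q ^ 2 ≤ R ^ (-s) * E ^ 2 := by
  have hRs : 0 < R ^ s := Real.rpow_pos_of_pos hR s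
  rw [Real.rpow_neg hR.le, ← div_eq_inv_mul, le_div_iff₀ hRs, mul_comm, Finset.mul_sum]
  refine le_trans (Finset.sum_le_sum fun q hq => ?_) hE
  have := hw q hq
  gcongr

lemma sum_le_of_dyadic_weight {ι : Type*} (T : Finset ι) {w a : ι → ℝ} {R s σ K E : ℝ}
    (hR : 0 < R) (hs : 0 ≤ s) (hσ : 0 ≤ σ) (hE0 : 0 ≤ E) (hwR : ∀ q ∈ T, R ≤ w q)
    (hw2R : ∀ q ∈ T, w q ≤ 2 * R) (hK : ∑ q ∈ T, w q ^ (-σ) ≤ K)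
    (hE : ∑ q ∈ T, w q ^ s * a q ^ 2 ≤ E ^ 2) :
    ∑ q ∈ T, a q ≤ √(K * 2 ^ σ) * R ^ ((σ - s) / 2) * E := by
  have hw0 : ∀ q ∈ T, 0 < w q := fun q hq => hR.trans_le (hwR q hq)
  have hK0 : 0 ≤ K := le_trans (Finset.sum_nonneg fun q hq =>
    Real.rpow_nonneg (hw0 q hq).le _) hK
  refine le_of_abs_le (abs_le_of_sq_le_sq ?_ (by positivity))
  have hsq : (√(K * 2 ^ σ) * R ^ ((σ - s) / 2) * E) ^ 2 =
      K * ((2 * R) ^ σ * (R ^ (-s) * E ^ 2)) := by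
    rw [mul_pow, mul_pow, Real.sq_sqrt (by positivity), ← Real.rpow_natCast (R ^ _),
      ← Real.rpow_mul hR.le, Real.mul_rpow zero_le_two hR.le]
    have : (σ - s) / 2 * ((2 : ℕ) : ℝ) = σ + -s := by push_cast; ring
    rw [this, Real.rpow_add hR]
    ring
  have hsq_rpow : ∀ q ∈ T, ∀ τ : ℝ, (w q ^ (τ / 2)) ^ 2 = w q ^ τ := fun q hq τ => by
    rw [← Real.rpow_natCast, ← Real.rpow_mul (hw0 q hq).le]; congr 1; push_cast; ring
  rw [hsq]
  calc (∑ q ∈ T, a q) ^ 2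
      = (∑ q ∈ T, w q ^ (-σ / 2) * (w q ^ (σ / 2) * a q)) ^ 2 := by
        congr 1
        refine Finset.sum_congr rfl fun q hq => ?_
        rw [← mul_assoc, ← Real.rpow_add (hw0 q hq), neg_div, neg_add_cancel, Real.rpow_zero,
          one_mul]
    _ ≤ (∑ q ∈ T, (w q ^ (-σ / 2)) ^ 2) * ∑ q ∈ T, (w q ^ (σ / 2) * a q) ^ 2 :=
        Finset.sum_mul_sq_le_sq_mul_sq _ _ _
    _ = (∑ q ∈ T, w q ^ (-σ)) * ∑ q ∈ T, w q ^ σ * a q ^ 2 := by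
        congr 1
        · exact Finset.sum_congr rfl fun q hq => hsq_rpow q hq _
        · exact Finset.sum_congr rfl fun q hq => by rw [mul_pow, hsq_rpow q hq]
    _ ≤ K * ((2 * R) ^ σ * ∑ q ∈ T, a q ^ 2) := by
        rw [Finset.mul_sum _ _ ((2 * R) ^ σ)]
        refine mul_le_mul hK (Finset.sum_le_sum fun q hq => ?_) (Finset.sum_nonneg fun q hq => ?_)
          hK0
        · have := hw2R q hq
          have := (hw0 q hq).le
          gcongr
        · have := (hw0 q hq).le
          positivity
    _ ≤ _ := by
        have := sum_sq_le_of_weight_ge T hR hs hwR hE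
        gcongr

/-- Bernstein-type bound for the frequencies with symbol between `R` and `2 * R`. -/
lemma integral_norm_dyadic_block_rpow_le {p s σ K E R : ℝ} (hp : 2 < p) (hs : 0 ≤ s)
    (hσ : 0 ≤ σ) (hE0 : 0 ≤ E) (hR : 0 < R) (T : Finset (ℤ × ℤ)) (a : ℤ × ℤ → ℂ)
    (hwR : ∀ q ∈ T, R ≤ dalembertSymbol q) (hw2R : ∀ q ∈ T, dalembertSymbol q ≤ 2 * R)
    (hK : ∑ q ∈ T, dalembertSymbol q ^ (-σ) ≤ K)
    (hE : ∑ q ∈ T, dalembertSymbol q ^ s * ‖a q‖ ^ 2 ≤ E ^ 2) :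
    ∫ z in periodCell, ‖∑ q ∈ T, a q * torusMode q z‖ ^ p ≤
      ((2 * π ^ 2 * √(K * 2 ^ σ) ^ (p - 2)) ^ p⁻¹ *
        R ^ (-((s * p - σ * (p - 2)) / (2 * p))) * E) ^ p := by
  have hp0 : 0 < p := by linarith
  have hM := sum_le_of_dyadic_weight T hR hs hσ hE0 hwR hw2R hK hE
  refine (integral_norm_sum_torusMode_rpow_le hp T a hM).trans ?_
  have hA := sum_sq_le_of_weight_ge T hR hs hwR hE
  have hG : 0 ≤ √(K * 2 ^ σ) := Real.sqrt_nonneg _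
  set G := √(K * 2 ^ σ)
  calc (G * R ^ ((σ - s) / 2) * E) ^ (p - 2) * (2 * π ^ 2 * ∑ q ∈ T, ‖a q‖ ^ 2)
      ≤ (G * R ^ ((σ - s) / 2) * E) ^ (p - 2) * (2 * π ^ 2 * (R ^ (-s) * E ^ 2)) := by gcongr
    _ = 2 * π ^ 2 * G ^ (p - 2) * (R ^ ((σ - s) / 2 * (p - 2)) * R ^ (-s)) *
          (E ^ (p - 2) * E ^ (2 : ℝ)) := by
        rw [Real.mul_rpow (by positivity) hE0, Real.mul_rpow hG (by positivity),
          ← Real.rpow_mul hR.le, Real.rpow_two]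
        ring
    _ = _ := by
        rw [← Real.rpow_add hR, ← Real.rpow_add' hE0 (by linarith), Real.mul_rpow (by positivity) hE0,
          Real.mul_rpow (by positivity) (by positivity), Real.rpow_inv_rpow (by positivity) hp0.ne',
          ← Real.rpow_mul hR.le, sub_add_cancel]
        congr 3
        field_simp
        ring

/-- The embedding `E^s ⊂ L^p` for `s > (p - 2) / p`, on trigonometric polynomials. -/
theorem exists_integral_norm_sum_torusMode_rpow_le {p s : ℝ} (hp : 2 < p)
    (hs : (p - 2) / p < s) :
    ∃ c > 0, ∀ (a : ℤ × ℤ → ℂ) (E : ℝ), 0 ≤ E → ∀ S : Finset (ℤ × ℤ),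
      (∀ q ∈ S, 1 ≤ dalembertSymbol q) →
      ∑ q ∈ S, dalembertSymbol q ^ s * ‖a q‖ ^ 2 ≤ E ^ 2 →
      ∫ z in periodCell, ‖∑ q ∈ S, a q * torusMode q z‖ ^ p ≤ (c * E) ^ p := by
  have hp0 : 0 < p := by linarith
  have hp2 : 0 < p - 2 := by linarith
  have hs0 : 0 < s := lt_trans (by positivity) hs
  obtain ⟨σ, hσ1, hσ⟩ : ∃ σ, 1 < σ ∧ σ < s * p / (p - 2) := by
    refine exists_between ?_
    rw [div_lt_iff₀ hp0] at hs
    rwa [one_lt_div hp2]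
  rw [lt_div_iff₀ hp2] at hσ
  set δ := (s * p - σ * (p - 2)) / (2 * p)
  have hδ0 : 0 < δ := div_pos (by linarith) (by positivity)
  set K := ∑' q, dalembertSymbol q ^ (-σ)
  set C := (2 * π ^ 2 * √(K * 2 ^ σ) ^ (p - 2)) ^ p⁻¹
  have hC : 0 ≤ C := by positivity
  set r : ℝ := 2 ^ (-δ) with hr
  have hr0 : 0 < r := by positivity
  have hr1 : r < 1 := Real.rpow_lt_one_of_one_lt_of_neg one_lt_two (by linarith)
  have hgeo : 0 < (1 - r)⁻¹ := inv_pos.2 (by linarith)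
  refine ⟨C * (1 - r)⁻¹ + 1, by positivity, fun a E hE0 S hS hE => ?_⟩
  have hlevel : ∀ q : ℤ × ℤ, ∃ l : ℕ, 1 ≤ dalembertSymbol q →
      (2 : ℝ) ^ l ≤ dalembertSymbol q ∧ dalembertSymbol q < 2 ^ (l + 1) := fun q => by
    by_cases h : 1 ≤ dalembertSymbol q
    · obtain ⟨l, hl⟩ := exists_nat_pow_near h one_lt_two
      exact ⟨l, fun _ => hl⟩
    · exact ⟨0, fun h' => absurd h' h⟩
  choose level hlevel using hlevel
  have hblock : ∀ l ∈ S.image level,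
      ∫ z in periodCell, ‖∑ q ∈ S with level q = l, a q * torusMode q z‖ ^ p ≤
        (C * r ^ l * E) ^ p := fun l _ => by
    have hrl : r ^ l = ((2 : ℝ) ^ l) ^ (-δ) := by
      rw [hr, ← Real.rpow_natCast, ← Real.rpow_natCast, ← Real.rpow_mul zero_le_two,
        ← Real.rpow_mul zero_le_two, mul_comm]
    rw [hrl]
    refine integral_norm_dyadic_block_rpow_le hp hs0.le (by linarith) hE0 (by positivity) _ a
      (fun q hq => ?_) (fun q hq => ?_) ?_ ?_
    · obtain ⟨hqS, rfl⟩ := Finset.mem_filter.1 hq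
      exact (hlevel q (hS q hqS)).1
    · obtain ⟨hqS, rfl⟩ := Finset.mem_filter.1 hq
      rw [← pow_succ']
      exact (hlevel q (hS q hqS)).2.le
    · exact (summable_dalembertSymbol_rpow hσ1).sum_le_tsum _ fun q _ =>
        Real.rpow_nonneg (dalembertSymbol_nonneg q) _
    · refine le_trans (Finset.sum_le_sum_of_subset_of_nonneg (Finset.filter_subset _ _)
        fun q _ _ => ?_) hE
      have := dalembertSymbol_nonneg q
      positivity
  have hmink := integral_norm_sum_rpow_le (by linarith) (S.image level)
    (fun l _ => memLp_sum_torusMode (S.filter fun q => level q = l) a (ENNReal.ofReal p))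
    (fun l _ => by positivity) hblock
  simp only [Finset.sum_fiberwise_of_maps_to fun q hq => Finset.mem_image_of_mem level hq] at hmink
  refine hmink.trans (Real.rpow_le_rpow (Finset.sum_nonneg fun l _ => by positivity) ?_ hp0.le)
  rw [← Finset.sum_mul, ← Finset.mul_sum]
  have : ∑ l ∈ S.image level, r ^ l ≤ (1 - r)⁻¹ := by
    rw [← tsum_geometric_of_lt_one hr0.le hr1]
    exact (summable_geometric_of_lt_one hr0.le hr1).sum_le_tsum _ fun l _ => by positivity
  calc C * (∑ l ∈ S.image level, r ^ l) * E ≤ C * (1 - r)⁻¹ * E := by gcongr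
    _ ≤ (C * (1 - r)⁻¹ + 1) * E := by gcongr; linarith

lemma integral_norm_tsum_torusMode_rpow_le {p B : ℝ} (hp : 0 < p) {a : ℤ × ℤ → ℂ} (hB : 0 ≤ B)
    (h : ∀ S : Finset (ℤ × ℤ), ∫ z in periodCell, ‖∑ q ∈ S, a q * torusMode q z‖ ^ p ≤ B) :
    ∫ z in periodCell, ‖∑' q, a q * torusMode q z‖ ^ p ≤ B := by
  have hnorm : ∀ z, (fun q => ‖a q * torusMode q z‖) = fun q => ‖a q‖ := fun z => by
    ext q; rw [norm_mul, norm_torusMode, mul_one]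
  by_cases ha : Summable fun q => ‖a q‖
  · refine le_of_tendsto (tendsto_integral_filter_of_dominated_convergence
      (l := Filter.atTop) (F := fun S z => ‖∑ q ∈ S, a q * torusMode q z‖ ^ p)
      (fun _ => (∑' q, ‖a q‖) ^ p) (.of_forall fun S => ?_)
      (.of_forall fun S => .of_forall fun z => ?_)
      (integrable_const _) (.of_forall fun z => ?_)) (.of_forall h)
    · exact ((continuous_sum_torusMode S a).norm.rpow_const
        fun _ => Or.inr hp.le).aestronglyMeasurable
    · rw [Real.norm_of_nonneg (by positivity)]
      refine Real.rpow_le_rpow (norm_nonneg _) ((norm_sum_torusMode_le S a z).trans ?_) hp.le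
      exact ha.sum_le_tsum _ fun q _ => norm_nonneg _
    · have hz : Summable fun q => a q * torusMode q z := .of_norm (by rwa [hnorm])
      exact hz.hasSum.norm.rpow_const (Or.inr hp.le)
  · have hz : ∀ z, ∑' q, a q * torusMode q z = 0 := fun z =>
      tsum_eq_zero_of_not_summable fun hz => ha (by rw [← hnorm z]; exact hz.norm)
    simpa [hz, Real.zero_rpow hp.ne'] using hB

/-- The embedding `E^s ⊂ L^p` for `s > (p - 2) / p`. -/
theorem exists_integral_norm_tsum_torusMode_rpow_le {p s : ℝ} (hp : 2 < p)
    (hs : (p - 2) / p < s) :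
    ∃ c > 0, ∀ a : ℤ × ℤ → ℂ, (∀ q, a q ≠ 0 → 1 ≤ dalembertSymbol q) →
      Summable (fun q => dalembertSymbol q ^ s * ‖a q‖ ^ 2) →
      ∫ z in periodCell, ‖∑' q, a q * torusMode q z‖ ^ p ≤
        (c * √(∑' q, dalembertSymbol q ^ s * ‖a q‖ ^ 2)) ^ p := by
  obtain ⟨c, hc, h⟩ := exists_integral_norm_sum_torusMode_rpow_le hp hs
  refine ⟨c, hc, fun a ha hsum => ?_⟩
  refine integral_norm_tsum_torusMode_rpow_le (by linarith) (by positivity) fun S => ?_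
  have hnn : ∀ q, 0 ≤ dalembertSymbol q ^ s * ‖a q‖ ^ 2 := fun q => by
    have := dalembertSymbol_nonneg q
    positivity
  have hS : ∀ z, ∑ q ∈ S, a q * torusMode q z =
      ∑ q ∈ S with a q ≠ 0, a q * torusMode q z := fun z => by
    rw [Finset.sum_filter_of_ne]
    exact fun q _ hq => left_ne_zero_of_mul hq
  simp only [hS]
  refine h a _ (Real.sqrt_nonneg _) _ (fun q hq => ha q (Finset.mem_filter.1 hq).2) ?_
  rw [Real.sq_sqrt (tsum_nonneg hnn)]
  exact hsum.sum_le_tsum _ fun q _ => hnn q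

lemma summable_norm_sq_of_summable_dalembertSymbol_mul {a : ℤ × ℤ → ℂ}
    (ha : ∀ q, a q ≠ 0 → 1 ≤ dalembertSymbol q)
    (hsum : Summable fun q => dalembertSymbol q * ‖a q‖ ^ 2) : Summable fun q => ‖a q‖ ^ 2 := by
  refine hsum.of_nonneg_of_le (fun q => by positivity) fun q => ?_
  by_cases h : a q = 0
  · simp [h]
  · exact le_mul_of_one_le_left (by positivity) (ha q h)

lemma one_le_dalembertSymbol_of_ne_zero {a : ℤ × ℤ → ℂ}
    (ha : ∀ j k : ℤ, (2 * j = k ∨ 2 * j = -k) → a (j, k) = 0) (q : ℤ × ℤ) (hq : a q ≠ 0) :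
    1 ≤ dalembertSymbol q :=
  one_le_dalembertSymbol fun h => hq (ha q.1 q.2 h)

/-- Interpolation ‖f‖_{E^s} ≤ ‖f‖_{L²}^{1−s} ‖f‖_{E¹}^{s}, and the resulting
Gagliardo–Nirenberg inequality ‖f‖_{L^p} ≤ c(p) ‖f‖_{L²}^{1−s(p)} ‖f‖_{E¹}^{s(p)}. -/
theorem stmt_9 :
    (∀ s : ℝ, 0 < s → s < 1 → ∀ fh : ℤ × ℤ → ℂ,
      (∀ j k : ℤ, (2 * j = k ∨ 2 * j = -k) → fh (j, k) = 0) →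
      Summable (fun jk : ℤ × ℤ =>
        ((|jk.2 ^ 2 - 4 * jk.1 ^ 2| : ℤ) : ℝ) * ‖fh jk‖ ^ 2) →
      Real.sqrt (∑' jk : ℤ × ℤ, ((|jk.2 ^ 2 - 4 * jk.1 ^ 2| : ℤ) : ℝ) ^ s * ‖fh jk‖ ^ 2) ≤
        Real.sqrt (∑' jk : ℤ × ℤ, ‖fh jk‖ ^ 2) ^ (1 - s) *
        Real.sqrt (∑' jk : ℤ × ℤ,
          ((|jk.2 ^ 2 - 4 * jk.1 ^ 2| : ℤ) : ℝ) * ‖fh jk‖ ^ 2) ^ s) ∧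
    (∀ p : ℝ, 2 < p → ∃ c > 0, ∀ fh : ℤ × ℤ → ℂ,
      (∀ j k : ℤ, (2 * j = k ∨ 2 * j = -k) → fh (j, k) = 0) →
      Summable (fun jk : ℤ × ℤ =>
        ((|jk.2 ^ 2 - 4 * jk.1 ^ 2| : ℤ) : ℝ) * ‖fh jk‖ ^ 2) →
      ∀ f : ℝ × ℝ → ℂ,
        (∀ x t : ℝ, f (x, t) = ∑' jk : ℤ × ℤ,
          fh jk * Complex.exp (Complex.I * (2 * jk.1 * x + jk.2 * t))) →
        ∫ z in Set.Icc (0 : ℝ) Real.pi ×ˢ Set.Icc (0 : ℝ) (2 * Real.pi), ‖f z‖ ^ p ≤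
          (c * Real.sqrt (∑' jk : ℤ × ℤ, ‖fh jk‖ ^ 2) ^ (1 - (p - 2) / (p - 1)) *
            Real.sqrt (∑' jk : ℤ × ℤ,
              ((|jk.2 ^ 2 - 4 * jk.1 ^ 2| : ℤ) : ℝ) * ‖fh jk‖ ^ 2) ^ ((p - 2) / (p - 1))) ^ p) := by
  refine ⟨fun s hs0 hs1 fh hfh hsum => ?_, fun p hp => ?_⟩
  · exact sqrt_tsum_rpow_mul_le dalembertSymbol_nonneg (fun q => by positivity)
      (summable_norm_sq_of_summable_dalembertSymbol_mul
        (one_le_dalembertSymbol_of_ne_zero hfh) hsum) hsum hs0 hs1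
  · have hp1 : 0 < p - 1 := by linarith
    have hp2 : 0 < p - 2 := by linarith
    have hs0 : 0 < (p - 2) / (p - 1) := by positivity
    have hs1 : (p - 2) / (p - 1) < 1 := by rw [div_lt_one hp1]; linarith
    obtain ⟨c, hc, h⟩ := exists_integral_norm_tsum_torusMode_rpow_le hp
      (s := (p - 2) / (p - 1)) (by gcongr; linarith)
    refine ⟨c, hc, fun fh hfh hsum f hf => ?_⟩
    have hsupp := one_le_dalembertSymbol_of_ne_zero hfh
    have hsq := summable_norm_sq_of_summable_dalembertSymbol_mul hsupp hsum
    have hf' : f = fun z => ∑' q, fh q * torusMode q z := funext fun z => hf z.1 z.2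
    rw [hf']
    refine (h fh hsupp (tsum_rpow_mul_le dalembertSymbol_nonneg (fun q => by positivity)
      hsq hsum hs0 hs1).1).trans (Real.rpow_le_rpow (by positivity) ?_ (by linarith))
    rw [mul_assoc]
    exact mul_le_mul_of_nonneg_left (sqrt_tsum_rpow_mul_le dalembertSymbol_nonneg
      (fun q => by positivity) hsq hsum hs0 hs1) hc.le
end

section
/- For 0 < s < 1 the inclusion E¹ ↪ E^s is compact, and hence (via E^s ↪ L^p with p = (2−s)/(1−s)) the embedding of E¹ into L^p(Q) is compact for every 2 ≤ p < ∞. -/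
open Real Complex MeasureTheory

namespace WaveEmbedding

open Filter Topology

/-- The absolute value `|k² - 4j²|` of the symbol of the wave operator at `(j, k)`. -/
def symbolAbs (a : ℤ × ℤ) : ℕ := (a.2 ^ 2 - 4 * a.1 ^ 2).natAbs

/-- The Fourier mode `e^{i(2jx + kt)}`. -/
noncomputable def mode (a : ℤ × ℤ) (z : ℝ × ℝ) : ℂ :=
  Complex.exp (Complex.I * (2 * a.1 * z.1 + a.2 * z.2))

/-- The period cell `[0, π] × [0, 2π]`. -/
def cell : Set (ℝ × ℝ) := Set.Icc (0 : ℝ) Real.pi ×ˢ Set.Icc (0 : ℝ) (2 * Real.pi)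

lemma cast_symbolAbs (a : ℤ × ℤ) :
    ((|a.2 ^ 2 - 4 * a.1 ^ 2| : ℤ) : ℝ) = (symbolAbs a : ℝ) := by
  rw [symbolAbs, Nat.cast_natAbs]

lemma symbolAbs_eq_zero_iff (a : ℤ × ℤ) :
    symbolAbs a = 0 ↔ 2 * a.1 = a.2 ∨ 2 * a.1 = -a.2 := by
  rw [symbolAbs, Int.natAbs_eq_zero,
    show a.2 ^ 2 - 4 * a.1 ^ 2 = (a.2 - 2 * a.1) * (a.2 + 2 * a.1) by ring, mul_eq_zero]
  constructor <;> rintro (h | h)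
  exacts [.inl (by lia), .inr (by lia), .inl (by lia), .inr (by lia)]

/-- In the characteristic variables `k ± 2j` the weight factorizes. -/
lemma summable_symbolAbs_rpow_neg {r : ℝ} (hr : 1 < r) :
    Summable fun a : ℤ × ℤ => (symbolAbs a : ℝ) ^ (-r) := by
  have h1 := Real.summable_abs_int_rpow hr
  have h2 : Summable fun x : ℤ × ℤ => |(x.1 : ℝ)| ^ (-r) * |(x.2 : ℝ)| ^ (-r) :=
    h1.mul_of_nonneg h1 (fun _ => by positivity) (fun _ => by positivity)
  have hinj : Function.Injective fun a : ℤ × ℤ => (a.2 - 2 * a.1, a.2 + 2 * a.1) := by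
    rintro ⟨j, k⟩ ⟨j', k'⟩ h
    simp only [Prod.mk.injEq] at h ⊢
    lia
  refine (h2.comp_injective hinj).congr fun a => ?_
  simp only [Function.comp_apply]
  rw [← Real.mul_rpow (abs_nonneg _) (abs_nonneg _), ← abs_mul, ← cast_symbolAbs]
  push_cast
  congr 2
  ring

lemma finite_symbolAbs_lt (M : ℕ) : {a : ℤ × ℤ | symbolAbs a ≠ 0 ∧ symbolAbs a < M}.Finite := by
  rcases Nat.eq_zero_or_pos M with rfl | hM
  · simp
  have h := (summable_symbolAbs_rpow_neg one_lt_two).tendsto_cofinite_zero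
  have hM' : (0 : ℝ) < (M : ℝ) ^ (-2 : ℝ) := by positivity
  refine (eventually_cofinite.1 (h.eventually_lt_const hM')).subset fun a ha => ?_
  rw [Set.mem_ofPred_eq, not_lt]
  exact Real.rpow_le_rpow_of_nonpos (by exact_mod_cast Nat.pos_of_ne_zero ha.1)
    (by exact_mod_cast ha.2.le) (by norm_num)

lemma norm_mode (a : ℤ × ℤ) (z : ℝ × ℝ) : ‖mode a z‖ = 1 := by
  rw [mode, mul_comm]
  exact_mod_cast Complex.norm_exp_ofReal_mul_I (2 * a.1 * z.1 + a.2 * z.2)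

@[fun_prop]
lemma continuous_mode (a : ℤ × ℤ) : Continuous (mode a) := by
  unfold mode
  fun_prop

lemma mode_mul_conj_mode (a b : ℤ × ℤ) (z : ℝ × ℝ) :
    mode a z * (starRingEnd ℂ) (mode b z) = mode (a - b) z := by
  simp only [mode, ← Complex.exp_conj, ← Complex.exp_add]
  congr 1
  simp [Complex.conj_ofNat]
  ring

instance isFiniteMeasure_restrict_cell : IsFiniteMeasure (volume.restrict cell) :=
  isFiniteMeasure_restrict.2 (isCompact_Icc.prod isCompact_Icc).measure_lt_top.ne

lemma integrableOn_cell {E : Type*} [NormedAddCommGroup E] {g : ℝ × ℝ → E} (hg : Continuous g) :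
    IntegrableOn g cell :=
  hg.continuousOn.integrableOn_compact (isCompact_Icc.prod isCompact_Icc)

lemma integral_exp_int_mul_eq_zero {c : ℝ} {T : ℝ} (hT : 0 ≤ T) (hc : c ≠ 0) {n : ℤ}
    (h : c * T = n * (2 * π)) : ∫ x in Set.Icc 0 T, Complex.exp (Complex.I * (c * x)) = 0 := by
  rw [integral_Icc_eq_integral_Ioc, ← intervalIntegral.integral_of_le hT]
  have hc' : Complex.I * (c : ℂ) ≠ 0 := mul_ne_zero Complex.I_ne_zero (by exact_mod_cast hc)
  simp_rw [← mul_assoc]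
  rw [integral_exp_mul_complex hc']
  have : Complex.exp (Complex.I * c * T) = 1 := by
    rw [Complex.exp_eq_one_iff]
    refine ⟨n, ?_⟩
    have h' : (c : ℂ) * T = n * (2 * π) := by exact_mod_cast h
    linear_combination Complex.I * h'
  simp [this]

lemma integral_mode (a : ℤ × ℤ) :
    ∫ z in cell, mode a z = if a = 0 then ((2 * π ^ 2 : ℝ) : ℂ) else 0 := by
  have hsplit : ∫ z in cell, mode a z =
      (∫ x in Set.Icc (0 : ℝ) π, Complex.exp (Complex.I * (((2 * a.1 : ℝ) : ℂ) * x))) *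
        ∫ t in Set.Icc (0 : ℝ) (2 * π), Complex.exp (Complex.I * (((a.2 : ℝ) : ℂ) * t)) := by
    rw [← setIntegral_prod_mul, ← Measure.volume_eq_prod]
    refine integral_congr_ae (.of_forall fun z => ?_)
    simp only [mode, ← Complex.exp_add]
    congr 1
    push_cast
    ring
  rw [hsplit]
  split_ifs with h
  · subst h
    simp [Real.pi_nonneg]
    ring
  · have h' : a.1 ≠ 0 ∨ a.2 ≠ 0 := by
      by_contra! hc
      exact h (Prod.ext hc.1 hc.2)
    rcases h' with h' | h'
    · rw [integral_exp_int_mul_eq_zero Real.pi_nonneg (n := a.1) (by simpa using h') (by ring),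
        zero_mul]
    · rw [integral_exp_int_mul_eq_zero Real.two_pi_pos.le (n := a.2) (by simpa using h') rfl,
        mul_zero]

lemma integral_norm_sq_sum_mode (F : Finset (ℤ × ℤ)) (c : ℤ × ℤ → ℂ) :
    ∫ z in cell, ‖∑ a ∈ F, c a * mode a z‖ ^ 2 = 2 * π ^ 2 * ∑ a ∈ F, ‖c a‖ ^ 2 := by
  have key : ∫ z in cell, ((‖∑ a ∈ F, c a * mode a z‖ ^ 2 : ℝ) : ℂ) =
      ((2 * π ^ 2 * ∑ a ∈ F, ‖c a‖ ^ 2 : ℝ) : ℂ) := by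
    have h1 (z : ℝ × ℝ) : ((‖∑ a ∈ F, c a * mode a z‖ ^ 2 : ℝ) : ℂ) =
        ∑ a ∈ F, ∑ b ∈ F, c a * (starRingEnd ℂ) (c b) * mode (a - b) z := by
      push_cast
      rw [← Complex.mul_conj', map_sum, Finset.sum_mul_sum]
      refine Finset.sum_congr rfl fun a _ => Finset.sum_congr rfl fun b _ => ?_
      rw [map_mul, ← mode_mul_conj_mode]
      ring
    simp_rw [h1]
    rw [integral_finsetSum _ fun a _ => integrableOn_cell (by fun_prop)]
    push_cast
    rw [Finset.mul_sum]
    refine Finset.sum_congr rfl fun a ha => ?_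
    rw [integral_finsetSum _ fun b _ => integrableOn_cell (by fun_prop)]
    simp_rw [integral_const_mul, integral_mode, sub_eq_zero]
    simp only [mul_ite, mul_zero, Finset.sum_ite_eq, ha, if_true]
    rw [Complex.mul_conj']
    push_cast
    ring
  rw [integral_complex_ofReal] at key
  exact_mod_cast key

/-- On a dyadic shell of the symbol, interpolate between the sup norm, controlled by
Cauchy–Schwarz, and the `L²` norm, controlled by orthogonality. -/
lemma exists_integral_norm_rpow_shell_le {s p : ℝ} (hs0 : 0 < s) (hs1 : s < 1)
    (hp : p = (2 - s) / (1 - s)) :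
    ∃ K : ℝ, 0 ≤ K ∧ ∀ (m : ℕ) (G : Finset (ℤ × ℤ)) (c : ℤ × ℤ → ℂ),
      (∀ a ∈ G, 2 ^ m ≤ symbolAbs a ∧ symbolAbs a < 2 ^ (m + 1)) →
      ∫ z in cell, ‖∑ a ∈ G, c a * mode a z‖ ^ p ≤
        K * ((2 : ℝ) ^ m) ^ (-(s / 4)) *
          (∑ a ∈ G, (symbolAbs a : ℝ) ^ s * ‖c a‖ ^ 2) ^ (p / 2) := by
  obtain ⟨r, hr⟩ : ∃ r : ℝ, r = 1 + (1 - s) / 2 := ⟨_, rfl⟩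
  obtain ⟨q, hq⟩ : ∃ q : ℝ, q = (p - 2) / 2 := ⟨_, rfl⟩
  have h1s : (1 - s) ≠ 0 := by linarith
  have hq' : q = s / (2 * (1 - s)) := by rw [hq, hp]; field_simp; ring
  have hq0 : 0 < q := by rw [hq']; exact div_pos hs0 (by linarith)
  have hp2 : p = 2 * q + 2 := by rw [hq]; ring
  have hrq : (r - s) * q = 3 * s / 4 := by rw [hq', hr]; field_simp; ring
  have hsum := summable_symbolAbs_rpow_neg (r := r) (by linarith)
  set S : ℝ := ∑' a, (symbolAbs a : ℝ) ^ (-r) with hS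
  have hS0 : 0 ≤ S := tsum_nonneg fun a => by positivity
  refine ⟨S ^ q * 2 ^ (3 * s / 4) * (2 * π ^ 2), by positivity, fun m G c hG => ?_⟩
  set E : ℝ := ∑ a ∈ G, (symbolAbs a : ℝ) ^ s * ‖c a‖ ^ 2 with hE
  have hE0 : 0 ≤ E := by positivity
  set T : ℝ := 2 ^ m with hT
  have hT0 : 0 < T := by positivity
  have hlow : ∀ a ∈ G, T ≤ symbolAbs a := fun a ha => by
    rw [hT]; exact_mod_cast (hG a ha).1
  have hupp : ∀ a ∈ G, (symbolAbs a : ℝ) ≤ 2 * T := fun a ha => by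
    rw [hT, ← pow_succ']; exact_mod_cast (hG a ha).2.le
  have hpos : ∀ a ∈ G, (0 : ℝ) < symbolAbs a := fun a ha => hT0.trans_le (hlow a ha)
  have hneg : ∑ a ∈ G, (symbolAbs a : ℝ) ^ (-s) ≤ S * (2 * T) ^ (r - s) := by
    calc ∑ a ∈ G, (symbolAbs a : ℝ) ^ (-s)
        ≤ ∑ a ∈ G, (symbolAbs a : ℝ) ^ (-r) * (2 * T) ^ (r - s) := by
          refine Finset.sum_le_sum fun a ha => ?_
          rw [show -s = -r + (r - s) by ring, Real.rpow_add (hpos a ha)]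
          gcongr
          · linarith
          · exact hupp a ha
      _ ≤ S * (2 * T) ^ (r - s) := by
          rw [← Finset.sum_mul]
          gcongr
          exact hsum.sum_le_tsum _ fun a _ => by positivity
  have hsup : ∀ z, ‖∑ a ∈ G, c a * mode a z‖ ^ 2 ≤ S * (2 * T) ^ (r - s) * E := fun z => by
    calc ‖∑ a ∈ G, c a * mode a z‖ ^ 2 ≤ (∑ a ∈ G, ‖c a‖) ^ 2 := by
          gcongr
          refine (norm_sum_le _ _).trans_eq (Finset.sum_congr rfl fun a _ => ?_)
          rw [norm_mul, norm_mode, mul_one]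
      _ ≤ (∑ a ∈ G, (symbolAbs a : ℝ) ^ (-s)) * E := by
          refine Finset.sum_sq_le_sum_mul_sum_of_sq_le_mul _ (fun a _ => by positivity)
            (fun a _ => by positivity) fun a ha => le_of_eq ?_
          rw [← mul_assoc, ← Real.rpow_add (hpos a ha), neg_add_cancel, Real.rpow_zero, one_mul]
      _ ≤ S * (2 * T) ^ (r - s) * E := by gcongr
  have hl2 : ∑ a ∈ G, ‖c a‖ ^ 2 ≤ T ^ (-s) * E := by
    rw [hE, Finset.mul_sum]
    refine Finset.sum_le_sum fun a ha => ?_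
    rw [← mul_assoc, Real.rpow_neg hT0.le, ← div_eq_inv_mul]
    refine le_mul_of_one_le_left (by positivity) ?_
    rw [one_le_div (by positivity)]
    exact Real.rpow_le_rpow hT0.le (hlow a ha) hs0.le
  have hcont : Continuous fun z => ∑ a ∈ G, c a * mode a z := by fun_prop
  calc ∫ z in cell, ‖∑ a ∈ G, c a * mode a z‖ ^ p
      ≤ ∫ z in cell, (S * (2 * T) ^ (r - s) * E) ^ q * ‖∑ a ∈ G, c a * mode a z‖ ^ 2 := by
        refine integral_mono
          (integrableOn_cell (hcont.norm.rpow_const fun _ => .inr (by linarith)))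
          (integrableOn_cell (by fun_prop)) fun z => ?_
        simp only
        rw [hp2, Real.rpow_add' (norm_nonneg _) (by linarith), Real.rpow_mul (norm_nonneg _),
          Real.rpow_two]
        gcongr
        exact hsup z
    _ = (S * (2 * T) ^ (r - s) * E) ^ q * (2 * π ^ 2 * ∑ a ∈ G, ‖c a‖ ^ 2) := by
        rw [integral_const_mul, integral_norm_sq_sum_mode]
    _ ≤ (S * (2 * T) ^ (r - s) * E) ^ q * (2 * π ^ 2 * (T ^ (-s) * E)) := by gcongr
    _ = S ^ q * 2 ^ (3 * s / 4) * (2 * π ^ 2) * T ^ (-(s / 4)) * E ^ (p / 2) := by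
        rw [Real.mul_rpow (by positivity) hE0, Real.mul_rpow hS0 (by positivity),
          ← Real.rpow_mul (by positivity), hrq, Real.mul_rpow zero_le_two hT0.le,
          show p / 2 = q + 1 by rw [hp2]; ring, Real.rpow_add_one' hE0 (by linarith),
          show -(s / 4) = 3 * s / 4 + -s by ring, Real.rpow_add hT0]
        ring

/-- The embedding `E^s ↪ L^p` on trigonometric polynomials. -/
lemma exists_integral_norm_sum_mode_rpow_le {s p : ℝ} (hs0 : 0 < s) (hs1 : s < 1)
    (hp : p = (2 - s) / (1 - s)) :
    ∃ C : ℝ, 0 ≤ C ∧ ∀ (F : Finset (ℤ × ℤ)) (c : ℤ × ℤ → ℂ), (∀ a ∈ F, symbolAbs a ≠ 0) →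
      ∫ z in cell, ‖∑ a ∈ F, c a * mode a z‖ ^ p ≤
        C * (∑ a ∈ F, (symbolAbs a : ℝ) ^ s * ‖c a‖ ^ 2) ^ (p / 2) := by
  obtain ⟨K, hK0, hK⟩ := exists_integral_norm_rpow_shell_le hs0 hs1 hp
  have hp1 : 1 < p := by rw [hp, one_lt_div (by linarith)]; linarith
  have hp0 : 0 < p := by linarith
  obtain ⟨ρ, hρ⟩ : ∃ ρ : ℝ, ρ = 2 ^ (-(s / 4) * p⁻¹) := ⟨_, rfl⟩
  have hρ0 : 0 ≤ ρ := by rw [hρ]; positivity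
  have hρ1 : ρ < 1 := by
    rw [hρ]
    refine Real.rpow_lt_one_of_one_lt_of_neg one_lt_two ?_
    rw [neg_mul, neg_lt_zero]
    positivity
  refine ⟨(K ^ p⁻¹ * (1 - ρ)⁻¹) ^ p,
    by have := inv_nonneg.2 (sub_nonneg.2 hρ1.le); positivity, fun F c hF => ?_⟩
  set E : ℝ := ∑ a ∈ F, (symbolAbs a : ℝ) ^ s * ‖c a‖ ^ 2 with hE
  have hE0 : 0 ≤ E := by positivity
  let level (a : ℤ × ℤ) : ℕ := Nat.log 2 (symbolAbs a)
  let I := F.image level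
  let g (m : ℕ) (z : ℝ × ℝ) : ℂ := ∑ a ∈ F with level a = m, c a * mode a z
  have hgc (m : ℕ) : Continuous (g m) := by fun_prop
  have hnorm {h : ℝ × ℝ → ℂ} (hh : Continuous h) :
      lpNorm h (ENNReal.ofReal p) (volume.restrict cell) = (∫ z in cell, ‖h z‖ ^ p) ^ p⁻¹ := by
    rw [lpNorm_eq_integral_norm_rpow_toReal (by simpa using hp0) ENNReal.ofReal_ne_top
      hh.aestronglyMeasurable, ENNReal.toReal_ofReal hp0.le]
  have hshell (m : ℕ) : lpNorm (g m) (ENNReal.ofReal p) (volume.restrict cell) ≤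
      K ^ p⁻¹ * E ^ (2 : ℝ)⁻¹ * ρ ^ m := by
    rw [hnorm (hgc m)]
    calc (∫ z in cell, ‖g m z‖ ^ p) ^ p⁻¹
        ≤ (K * ((2 : ℝ) ^ m) ^ (-(s / 4)) * E ^ (p / 2)) ^ p⁻¹ := by
          refine Real.rpow_le_rpow (integral_nonneg fun _ => by positivity)
            ((hK m _ c fun a ha => ?_).trans ?_) (by positivity)
          · obtain ⟨haF, rfl⟩ := Finset.mem_filter.1 ha
            exact ⟨Nat.pow_log_le_self 2 (hF a haF), Nat.lt_pow_succ_log_self one_lt_two _⟩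
          · gcongr
            exact Finset.sum_le_sum_of_subset_of_nonneg (Finset.filter_subset _ _)
              fun _ _ _ => by positivity
      _ = K ^ p⁻¹ * E ^ (2 : ℝ)⁻¹ * ρ ^ m := by
          rw [Real.mul_rpow (by positivity) (by positivity), Real.mul_rpow hK0 (by positivity),
            ← Real.rpow_mul (by positivity), ← Real.rpow_mul hE0,
            show p / 2 * p⁻¹ = (2 : ℝ)⁻¹ by field_simp, ← Real.rpow_natCast,
            ← Real.rpow_mul zero_le_two, mul_comm (m : ℝ), Real.rpow_mul zero_le_two, ← hρ,
            Real.rpow_natCast]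
          ring
  have hsplit : (fun z => ∑ a ∈ F, c a * mode a z) = ∑ m ∈ I, g m := by
    ext z
    rw [Finset.sum_apply]
    exact (Finset.sum_fiberwise_of_maps_to
      (fun a ha => Finset.mem_image_of_mem level ha) _).symm
  have hmem (m : ℕ) : MemLp (g m) (ENNReal.ofReal p) (volume.restrict cell) := by
    refine MemLp.of_bound (hgc m).aestronglyMeasurable (∑ a ∈ F with level a = m, ‖c a‖)
      (.of_forall fun z => (norm_sum_le _ _).trans_eq (Finset.sum_congr rfl fun a _ => ?_))
    rw [norm_mul, norm_mode, mul_one]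
  have htotal : (∫ z in cell, ‖∑ a ∈ F, c a * mode a z‖ ^ p) ^ p⁻¹ ≤
      K ^ p⁻¹ * (1 - ρ)⁻¹ * E ^ (2 : ℝ)⁻¹ := by
    rw [← hnorm (by fun_prop), hsplit]
    calc lpNorm (∑ m ∈ I, g m) (ENNReal.ofReal p) (volume.restrict cell)
        ≤ ∑ m ∈ I, lpNorm (g m) (ENNReal.ofReal p) (volume.restrict cell) :=
          lpNorm_sum_le (fun m _ => hmem m) (by simpa using hp1.le)
      _ ≤ ∑ m ∈ I, K ^ p⁻¹ * E ^ (2 : ℝ)⁻¹ * ρ ^ m := Finset.sum_le_sum fun m _ => hshell m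
      _ ≤ K ^ p⁻¹ * E ^ (2 : ℝ)⁻¹ * (1 - ρ)⁻¹ := by
          rw [← Finset.mul_sum, ← tsum_geometric_of_lt_one hρ0 hρ1]
          gcongr
          exact (summable_geometric_of_lt_one hρ0 hρ1).sum_le_tsum _ fun _ _ => by positivity
      _ = _ := by ring
  have hint : 0 ≤ ∫ z in cell, ‖∑ a ∈ F, c a * mode a z‖ ^ p :=
    integral_nonneg fun _ => by positivity
  have hinv := inv_nonneg.2 (sub_nonneg.2 hρ1.le)
  calc ∫ z in cell, ‖∑ a ∈ F, c a * mode a z‖ ^ p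
      ≤ (K ^ p⁻¹ * (1 - ρ)⁻¹ * E ^ (2 : ℝ)⁻¹) ^ p :=
        (Real.rpow_inv_le_iff_of_pos hint (by positivity) hp0).1 htotal
    _ = (K ^ p⁻¹ * (1 - ρ)⁻¹) ^ p * E ^ (p / 2) := by
        rw [Real.mul_rpow (by positivity) (by positivity), ← Real.rpow_mul hE0,
          inv_mul_eq_div]

/-- The embedding `E^s ↪ L^p` for functions with absolutely summable Fourier coefficients. -/
lemma exists_integral_norm_tsum_mode_rpow_le {s p : ℝ} (hs0 : 0 < s) (hs1 : s < 1)
    (hp : p = (2 - s) / (1 - s)) :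
    ∃ C : ℝ, 0 ≤ C ∧ ∀ c : ℤ × ℤ → ℂ, (∀ a, symbolAbs a = 0 → c a = 0) → Summable c →
      Summable (fun a => (symbolAbs a : ℝ) ^ s * ‖c a‖ ^ 2) →
      ∫ z in cell, ‖∑' a, c a * mode a z‖ ^ p ≤
        C * (∑' a, (symbolAbs a : ℝ) ^ s * ‖c a‖ ^ 2) ^ (p / 2) := by
  obtain ⟨C, hC0, hC⟩ := exists_integral_norm_sum_mode_rpow_le hs0 hs1 hp
  have hp0 : 0 < p := by rw [hp]; exact div_pos (by linarith) (by linarith)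
  refine ⟨C, hC0, fun c hc0 hc hcs => ?_⟩
  have hnorm (a : ℤ × ℤ) (z : ℝ × ℝ) : ‖c a * mode a z‖ = ‖c a‖ := by
    rw [norm_mul, norm_mode, mul_one]
  have hbound (F : Finset (ℤ × ℤ)) (z : ℝ × ℝ) :
      ‖∑ a ∈ F, c a * mode a z‖ ≤ ∑' a, ‖c a‖ := by
    refine (norm_sum_le _ _).trans ?_
    simp_rw [hnorm]
    exact hc.norm.sum_le_tsum _ fun _ _ => norm_nonneg _
  have hlim : Tendsto (fun F : Finset (ℤ × ℤ) => ∫ z in cell, ‖∑ a ∈ F, c a * mode a z‖ ^ p)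
      atTop (𝓝 (∫ z in cell, ‖∑' a, c a * mode a z‖ ^ p)) := by
    refine tendsto_integral_filter_of_dominated_convergence (fun _ => (∑' a, ‖c a‖) ^ p)
      (.of_forall fun F => ?_) (.of_forall fun F => .of_forall fun z => ?_)
      (integrable_const _) (.of_forall fun z => ?_)
    · exact (Continuous.rpow_const (by fun_prop) fun _ => .inr hp0.le).aestronglyMeasurable
    · rw [Real.norm_of_nonneg (by positivity)]
      exact Real.rpow_le_rpow (norm_nonneg _) (hbound F z) hp0.le
    · have hz : Summable fun a => c a * mode a z := .of_norm (by simpa only [hnorm] using hc.norm)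
      exact hz.hasSum.norm.rpow_const (.inr hp0.le)
  refine le_of_tendsto' hlim fun F => ?_
  have hfilter (z : ℝ × ℝ) : ∑ a ∈ F, c a * mode a z =
      ∑ a ∈ F with symbolAbs a ≠ 0, c a * mode a z := by
    refine (Finset.sum_filter_of_ne (p := fun a => symbolAbs a ≠ 0)
      fun a _ ha h0 => ha ?_).symm
    rw [hc0 a h0, zero_mul]
  simp_rw [hfilter]
  refine (hC _ c fun a ha => (Finset.mem_filter.1 ha).2).trans ?_
  gcongr
  exact hcs.sum_le_tsum _ fun _ _ => by positivity

lemma symbolAbs_mul_norm_sub_sq_le {c d : ℤ × ℤ → ℂ} (a : ℤ × ℤ) :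
    (symbolAbs a : ℝ) * ‖c a - d a‖ ^ 2 ≤
      2 * (symbolAbs a * ‖c a‖ ^ 2) + 2 * (symbolAbs a * ‖d a‖ ^ 2) := by
  have h : ‖c a - d a‖ ^ 2 ≤ 2 * ‖c a‖ ^ 2 + 2 * ‖d a‖ ^ 2 :=
    calc ‖c a - d a‖ ^ 2 ≤ (‖c a‖ + ‖d a‖) ^ 2 := by gcongr; exact norm_sub_le _ _
      _ ≤ 2 * ‖c a‖ ^ 2 + 2 * ‖d a‖ ^ 2 := by nlinarith [sq_nonneg (‖c a‖ - ‖d a‖)]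
  calc (symbolAbs a : ℝ) * ‖c a - d a‖ ^ 2
      ≤ symbolAbs a * (2 * ‖c a‖ ^ 2 + 2 * ‖d a‖ ^ 2) := by gcongr
    _ = _ := by ring

lemma summable_symbolAbs_mul_norm_sub_sq {c d : ℤ × ℤ → ℂ}
    (hc : Summable fun a => (symbolAbs a : ℝ) * ‖c a‖ ^ 2)
    (hd : Summable fun a => (symbolAbs a : ℝ) * ‖d a‖ ^ 2) :
    Summable fun a => (symbolAbs a : ℝ) * ‖c a - d a‖ ^ 2 :=
  .of_nonneg_of_le (fun _ => by positivity) symbolAbs_mul_norm_sub_sq_le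
    ((hc.mul_left 2).add (hd.mul_left 2))

lemma tsum_symbolAbs_mul_norm_sub_sq_le {c d : ℤ × ℤ → ℂ}
    (hc : Summable fun a => (symbolAbs a : ℝ) * ‖c a‖ ^ 2)
    (hd : Summable fun a => (symbolAbs a : ℝ) * ‖d a‖ ^ 2) :
    ∑' a, (symbolAbs a : ℝ) * ‖c a - d a‖ ^ 2 ≤
      2 * ∑' a, (symbolAbs a : ℝ) * ‖c a‖ ^ 2 + 2 * ∑' a, (symbolAbs a : ℝ) * ‖d a‖ ^ 2 := by
  rw [← tsum_mul_left, ← tsum_mul_left, ← (hc.mul_left 2).tsum_add (hd.mul_left 2)]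
  exact (summable_symbolAbs_mul_norm_sub_sq hc hd).tsum_le_tsum symbolAbs_mul_norm_sub_sq_le
    ((hc.mul_left 2).add (hd.mul_left 2))

lemma symbolAbs_rpow_le {s : ℝ} (hs0 : 0 < s) (hs1 : s < 1) (a : ℤ × ℤ) :
    (symbolAbs a : ℝ) ^ s ≤ symbolAbs a := by
  rcases Nat.eq_zero_or_pos (symbolAbs a) with h | h
  · simp [h, Real.zero_rpow hs0.ne']
  · exact Real.rpow_le_self_of_one_le (by exact_mod_cast h) hs1.le

lemma summable_symbolAbs_rpow_mul {s : ℝ} (hs0 : 0 < s) (hs1 : s < 1) {c : ℤ × ℤ → ℂ}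
    (hc : Summable fun a => (symbolAbs a : ℝ) * ‖c a‖ ^ 2) :
    Summable fun a => (symbolAbs a : ℝ) ^ s * ‖c a‖ ^ 2 :=
  .of_nonneg_of_le (fun _ => by positivity)
    (fun a => mul_le_mul_of_nonneg_right (symbolAbs_rpow_le hs0 hs1 a) (by positivity)) hc

/-- Splitting the `E^s` energy at the frequency level `M`. -/
lemma tsum_symbolAbs_rpow_mul_le {s : ℝ} (hs0 : 0 < s) (hs1 : s < 1) {c : ℤ × ℤ → ℂ}
    (hc : Summable fun a => (symbolAbs a : ℝ) * ‖c a‖ ^ 2) {M : ℕ} (hM : 0 < M) :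
    ∑' a, (symbolAbs a : ℝ) ^ s * ‖c a‖ ^ 2 ≤
      ∑ a ∈ (finite_symbolAbs_lt M).toFinset, (symbolAbs a : ℝ) ^ s * ‖c a‖ ^ 2 +
        (M : ℝ) ^ (s - 1) * ∑' a, (symbolAbs a : ℝ) * ‖c a‖ ^ 2 := by
  set F := (finite_symbolAbs_lt M).toFinset with hF
  refine Real.tsum_le_of_sum_le (fun _ => by positivity) fun G => ?_
  rw [← Finset.sum_inter_add_sum_sdiff G F]
  refine add_le_add (Finset.sum_le_sum_of_subset_of_nonneg Finset.inter_subset_right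
    fun _ _ _ => by positivity) ?_
  calc ∑ a ∈ G \ F, (symbolAbs a : ℝ) ^ s * ‖c a‖ ^ 2
      ≤ ∑ a ∈ G \ F, (M : ℝ) ^ (s - 1) * (symbolAbs a * ‖c a‖ ^ 2) := by
        refine Finset.sum_le_sum fun a ha => ?_
        rw [← mul_assoc]
        gcongr
        rcases Nat.eq_zero_or_pos (symbolAbs a) with h | h
        · simp [h, Real.zero_rpow hs0.ne']
        · have hMa : M ≤ symbolAbs a := by
            by_contra! hlt
            exact (Finset.mem_sdiff.1 ha).2 (by simp [hF, h.ne', hlt])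
          have h' : (0 : ℝ) < symbolAbs a := by exact_mod_cast h
          calc (symbolAbs a : ℝ) ^ s = (symbolAbs a : ℝ) ^ (s - 1) * symbolAbs a := by
                rw [← Real.rpow_add_one h'.ne', sub_add_cancel]
            _ ≤ (M : ℝ) ^ (s - 1) * symbolAbs a :=
                mul_le_mul_of_nonneg_right (Real.rpow_le_rpow_of_nonpos (by exact_mod_cast hM)
                  (by exact_mod_cast hMa) (by linarith)) h'.le
    _ ≤ (M : ℝ) ^ (s - 1) * ∑' a, (symbolAbs a : ℝ) * ‖c a‖ ^ 2 := by
        rw [← Finset.mul_sum]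
        gcongr
        exact hc.sum_le_tsum _ fun _ _ => by positivity

/-- Sequential compactness of the inclusion of `E¹` into `E^s`. -/
lemma exists_subseq_tendsto_energy_sub {s : ℝ} (hs0 : 0 < s) (hs1 : s < 1)
    (u : ℕ → ℤ × ℤ → ℂ) (hsupp : ∀ n a, symbolAbs a = 0 → u n a = 0)
    (hsum : ∀ n, Summable fun a => (symbolAbs a : ℝ) * ‖u n a‖ ^ 2)
    (hle : ∀ n, ∑' a, (symbolAbs a : ℝ) * ‖u n a‖ ^ 2 ≤ 1) :
    ∃ φ : ℕ → ℕ, StrictMono φ ∧ Tendsto (fun x : ℕ × ℕ =>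
      ∑' a, (symbolAbs a : ℝ) ^ s * ‖u (φ x.1) a - u (φ x.2) a‖ ^ 2) atTop (𝓝 0) := by
  have hball (n : ℕ) : u n ∈ Set.univ.pi fun _ : ℤ × ℤ => Metric.closedBall (0 : ℂ) 1 := by
    intro a _
    rw [mem_closedBall_zero_iff]
    rcases Nat.eq_zero_or_pos (symbolAbs a) with h | h
    · simp [hsupp n a h]
    · refine (sq_le_one_iff₀ (norm_nonneg _)).1 ?_
      calc ‖u n a‖ ^ 2 ≤ symbolAbs a * ‖u n a‖ ^ 2 :=
            le_mul_of_one_le_left (by positivity) (by exact_mod_cast h)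
        _ ≤ _ := (hsum n).le_tsum a fun _ _ => by positivity
        _ ≤ 1 := hle n
  obtain ⟨v, -, φ, hφ, hv⟩ :=
    (isCompact_univ_pi fun _ : ℤ × ℤ => isCompact_closedBall (0 : ℂ) 1).tendsto_subseq hball
  refine ⟨φ, hφ, ?_⟩
  have hcoord (a : ℤ × ℤ) :
      Tendsto (fun x : ℕ × ℕ => u (φ x.1) a - u (φ x.2) a) atTop (𝓝 0) := by
    have ha := tendsto_pi_nhds.1 hv a
    rw [← prod_atTop_atTop_eq, ← sub_self (v a)]
    exact (ha.comp tendsto_fst).sub (ha.comp tendsto_snd)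
  rw [tendsto_order]
  refine ⟨fun b hb => .of_forall fun x => hb.trans_le (tsum_nonneg fun _ => by positivity),
    fun ε hε => ?_⟩
  have hM : Tendsto (fun M : ℕ => (M : ℝ) ^ (s - 1) * 4) atTop (𝓝 0) := by
    have := (tendsto_rpow_neg_atTop (sub_pos.2 hs1)).comp tendsto_natCast_atTop_atTop
    simpa using this.mul_const 4
  obtain ⟨M, hMε, hM0⟩ :=
    ((hM.eventually_lt_const (half_pos hε)).and (eventually_gt_atTop 0)).exists
  have hfin : Tendsto (fun x : ℕ × ℕ => ∑ a ∈ (finite_symbolAbs_lt M).toFinset,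
      (symbolAbs a : ℝ) ^ s * ‖u (φ x.1) a - u (φ x.2) a‖ ^ 2) atTop (𝓝 0) := by
    simpa using tendsto_finsetSum (finite_symbolAbs_lt M).toFinset fun a _ =>
      ((hcoord a).norm.pow 2).const_mul ((symbolAbs a : ℝ) ^ s)
  filter_upwards [hfin.eventually_lt_const (half_pos hε)] with x hx
  have hsub := summable_symbolAbs_mul_norm_sub_sq (hsum (φ x.1)) (hsum (φ x.2))
  have h4 := tsum_symbolAbs_mul_norm_sub_sq_le (hsum (φ x.1)) (hsum (φ x.2))
  have hE : ∑' a, (symbolAbs a : ℝ) * ‖u (φ x.1) a - u (φ x.2) a‖ ^ 2 ≤ 4 := by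
    linarith [hle (φ x.1), hle (φ x.2)]
  calc _ ≤ _ := tsum_symbolAbs_rpow_mul_le (c := fun a => u (φ x.1) a - u (φ x.2) a)
        hs0 hs1 hsub hM0
    _ ≤ _ + (M : ℝ) ^ (s - 1) * 4 := by gcongr
    _ < ε / 2 + ε / 2 := add_lt_add hx hMε
    _ = ε := add_halves ε

/-- A sequence of coefficient families has a subsequence along which absolute summability does not
depend on the index. -/
lemma exists_subseq_summable_or_not (u : ℕ → ℤ × ℤ → ℂ) :
    ∃ ψ : ℕ → ℕ, StrictMono ψ ∧
      ((∀ n, Summable (u (ψ n))) ∨ ∀ n, ¬ Summable (u (ψ n))) := by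
  by_cases h : ∃ᶠ n in atTop, Summable (u n)
  · obtain ⟨ψ, hψ, h⟩ := extraction_of_frequently_atTop h
    exact ⟨ψ, hψ, .inl h⟩
  · obtain ⟨ψ, hψ, h⟩ := extraction_of_eventually_atTop (not_frequently.1 h)
    exact ⟨ψ, hψ, .inr h⟩

lemma summable_mul_mode_iff (c : ℤ × ℤ → ℂ) (z : ℝ × ℝ) :
    (Summable fun a => c a * mode a z) ↔ Summable c := by
  rw [← summable_norm_iff, ← summable_norm_iff (f := c)]
  simp only [norm_mul, norm_mode, mul_one]

end WaveEmbedding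


/-- Compactness of the embedding E¹ ↪ E^s (0 < s < 1) and hence of E¹ ↪ L^p(Q)
with p = (2−s)/(1−s): any sequence bounded in the E¹ norm has a subsequence which is
Cauchy in the E^s norm and whose associated functions are Cauchy in L^p(Q). -/
theorem stmt_10 (s p : ℝ) (hs0 : 0 < s) (hs1 : s < 1) (hp : p = (2 - s) / (1 - s))
    (u : ℕ → ℤ × ℤ → ℂ)
    (hsupp : ∀ n, ∀ j k : ℤ, (2 * j = k ∨ 2 * j = -k) → u n (j, k) = 0)
    (hbdd : ∀ n, Summable (fun jk : ℤ × ℤ =>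
      ((|jk.2 ^ 2 - 4 * jk.1 ^ 2| : ℤ) : ℝ) * ‖u n jk‖ ^ 2) ∧
      ∑' jk : ℤ × ℤ, ((|jk.2 ^ 2 - 4 * jk.1 ^ 2| : ℤ) : ℝ) * ‖u n jk‖ ^ 2 ≤ 1)
    (f : ℕ → ℝ × ℝ → ℂ)
    (hf : ∀ n, ∀ x t : ℝ, f n (x, t) = ∑' jk : ℤ × ℤ,
      u n jk * Complex.exp (Complex.I * (2 * jk.1 * x + jk.2 * t))) :
    ∃ φ : ℕ → ℕ, StrictMono φ ∧
      (∀ ε > 0, ∃ N : ℕ, ∀ a ≥ N, ∀ b ≥ N,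
        ∑' jk : ℤ × ℤ, ((|jk.2 ^ 2 - 4 * jk.1 ^ 2| : ℤ) : ℝ) ^ s *
          ‖u (φ a) jk - u (φ b) jk‖ ^ 2 ≤ ε) ∧
      (∀ ε > 0, ∃ N : ℕ, ∀ a ≥ N, ∀ b ≥ N,
        ∫ z in Set.Icc (0 : ℝ) Real.pi ×ˢ Set.Icc (0 : ℝ) (2 * Real.pi),
          ‖f (φ a) z - f (φ b) z‖ ^ p ≤ ε) := by
  obtain ⟨C, hC0, hC⟩ := WaveEmbedding.exists_integral_norm_tsum_mode_rpow_le hs0 hs1 hp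
  have hp0 : 0 < p := by rw [hp]; exact div_pos (by linarith) (by linarith)
  simp only [WaveEmbedding.cast_symbolAbs] at hbdd ⊢
  have hsupp' (n : ℕ) (a : ℤ × ℤ) (ha : WaveEmbedding.symbolAbs a = 0) : u n a = 0 :=
    hsupp n a.1 a.2 ((WaveEmbedding.symbolAbs_eq_zero_iff a).1 ha)
  have hf' (n : ℕ) (z : ℝ × ℝ) : f n z = ∑' a, u n a * WaveEmbedding.mode a z := hf n z.1 z.2
  obtain ⟨ψ, hψ, hψu⟩ := WaveEmbedding.exists_subseq_summable_or_not u
  obtain ⟨θ, hθ, hlim⟩ := WaveEmbedding.exists_subseq_tendsto_energy_sub hs0 hs1 (u ∘ ψ)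
    (fun n => hsupp' (ψ n)) (fun n => (hbdd (ψ n)).1) (fun n => (hbdd (ψ n)).2)
  refine ⟨ψ ∘ θ, hψ.comp hθ, fun ε hε => ?_, fun ε hε => ?_⟩
  · obtain ⟨N, hN⟩ := Filter.eventually_atTop_prod_self.1 (hlim.eventually_le_const hε)
    exact ⟨N, fun a ha b hb => hN a b ha hb⟩
  · rcases hψu with hψu | hψu
    · have hlim' := (hlim.rpow_const (p := p / 2) (.inr (by positivity))).const_mul C
      rw [Real.zero_rpow (by positivity), mul_zero] at hlim'
      obtain ⟨N, hN⟩ := Filter.eventually_atTop_prod_self.1 (hlim'.eventually_le_const hε)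
      refine ⟨N, fun a ha b hb => le_trans ?_ (hN a b ha hb)⟩
      have hdiff (z : ℝ × ℝ) : f ((ψ ∘ θ) a) z - f ((ψ ∘ θ) b) z =
          ∑' i, (u (ψ (θ a)) i - u (ψ (θ b)) i) * WaveEmbedding.mode i z := by
        simp only [hf', Function.comp_apply, sub_mul]
        exact (((WaveEmbedding.summable_mul_mode_iff _ z).2 (hψu _)).tsum_sub
          ((WaveEmbedding.summable_mul_mode_iff _ z).2 (hψu _))).symm
      simp_rw [hdiff]
      exact hC _ (fun i hi => by rw [hsupp' _ i hi, hsupp' _ i hi, sub_zero])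
        ((hψu _).sub (hψu _)) (WaveEmbedding.summable_symbolAbs_rpow_mul hs0 hs1
          (WaveEmbedding.summable_symbolAbs_mul_norm_sub_sq (hbdd _).1 (hbdd _).1))
    · have hzero (n : ℕ) (z : ℝ × ℝ) : f ((ψ ∘ θ) n) z = 0 := by
        rw [hf']
        exact tsum_eq_zero_of_not_summable
          fun h => hψu _ ((WaveEmbedding.summable_mul_mode_iff _ z).1 h)
      refine ⟨0, fun a _ b _ => ?_⟩
      simp_rw [hzero]
      simpa [Real.zero_rpow hp0.ne'] using hε.le
end
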